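/- arXiv:math/0602607 — 3 statements merged into one kernel-verified Lean document; each statement's English description precedes it below -/
import Mathlib

section
/- Let α ∈ ℂ∖ℝ be a constant and π : ℝ³ → M_n(ℂ) a smooth map with π* = π and π² = π (a Hermitian-projection-valued map); set π^⊥ = 1 − π and g_{α,π}(x,y,t,τ) = 1 + ((α−ᾱ)/(τ−α))·π^⊥(x,y,t) for τ ∈ ℂ∖{α,ᾱ}. Then the following are equivalent: (a) there exist maps P, Q : ℝ³ → M_n(ℂ) such that (τ∂_yg_{α,π} − ∂_ξg_{α,π})g_{α,π}⁻¹ = P and (τ∂_ηg_{α,π} − ∂_yg_{α,π})g_{α,π}⁻¹ = Q for every τ ∈ ℂ∖{α,ᾱ} (i.e. these expressions are independent of τ); (b) π satisfies the 1-soliton equations (α∂_yπ − ∂_ξπ)π = 0 and (α∂_ηπ − ∂_yπ)π = 0. -/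
open Matrix Complex
open scoped Matrix ComplexConjugate

attribute [local instance] Matrix.normedAddCommGroup Matrix.normedSpace

noncomputable section

/-- `n × n` complex matrices. -/
abbrev Mat (n : ℕ) := Matrix (Fin n) (Fin n) ℂ

/-- Space-time `ℝ³` with coordinates `(x, y, t)`. -/
abbrev P3 : Type := ℝ × ℝ × ℝ

section PartialDerivatives

variable {W : Type*} [NormedAddCommGroup W] [NormedSpace ℝ W]

/-- Partial derivative in `x`. -/
def pdx (f : P3 → W) (p : P3) : W := deriv (fun s => f (s, p.2.1, p.2.2)) p.1

/-- Partial derivative in `y`. -/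
def pdy (f : P3 → W) (p : P3) : W := deriv (fun s => f (p.1, s, p.2.2)) p.2.1

/-- Partial derivative in `t`. -/
def pdt (f : P3 → W) (p : P3) : W := deriv (fun s => f (p.1, p.2.1, s)) p.2.2

/-- Light-cone derivative `∂_ξ = ∂_t + ∂_x`. -/
def pdxi (f : P3 → W) (p : P3) : W := pdt f p + pdx f p

/-- Light-cone derivative `∂_η = ∂_t − ∂_x`. -/
def pdeta (f : P3 → W) (p : P3) : W := pdt f p - pdx f p

end PartialDerivatives

/-- `∂_z = ½(∂_x − i ∂_y)`. -/
def pdz {n : ℕ} (f : P3 → Mat n) (p : P3) : Mat n :=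
  (2⁻¹ : ℂ) • (pdx f p - Complex.I • pdy f p)

/-- `∂_z̄ = ½(∂_x + i ∂_y)`. -/
def pdzbar {n : ℕ} (f : P3 → Mat n) (p : P3) : Mat n :=
  (2⁻¹ : ℂ) • (pdx f p + Complex.I • pdy f p)

/-- Commutator `[X, Y] = XY − YX`. -/
def brk {n : ℕ} (X Y : Mat n) : Mat n := X * Y - Y * X

/-- Anti-Hermitian-valued map. -/
def SkewHerm {n : ℕ} (f : P3 → Mat n) : Prop := ∀ p : P3, (f p)ᴴ = -(f p)

/-- The space-time monopole equation `F_{xy} = −∇_tφ`, `F_{xt} = −∇_yφ`, `F_{yt} = ∇_xφ`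
for the connection `(Ax, Ay, At)` and Higgs field `Ph`, at the point `p`. -/
def MonopoleEqAt {n : ℕ} (Ax Ay At Ph : P3 → Mat n) (p : P3) : Prop :=
  (-(pdx Ay p) + pdy Ax p + brk (Ax p) (Ay p) = -(pdt Ph p - brk (At p) (Ph p))) ∧
  (-(pdx At p) + pdt Ax p + brk (Ax p) (At p) = -(pdy Ph p - brk (Ay p) (Ph p))) ∧
  (-(pdy At p) + pdt Ay p + brk (Ay p) (At p) = pdx Ph p - brk (Ax p) (Ph p))

/-- The space-time monopole equation on all of `ℝ³`. -/
def MonopoleEq {n : ℕ} (Ax Ay At Ph : P3 → Mat n) : Prop :=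
  ∀ p : P3, MonopoleEqAt Ax Ay At Ph p

/-- `E` solves the `μ`-linear system for `(A, φ)`. -/
def SolvesMu {n : ℕ} (Ax Ay At Ph : P3 → Mat n) (μ : ℂ) (E : P3 → Mat n) : Prop :=
  ∀ p : P3,
    (2⁻¹ : ℂ) • pdt E p + μ • pdz E p =
      ((2⁻¹ : ℂ) • (At p + Complex.I • Ph p) +
        μ • ((2⁻¹ : ℂ) • (Ax p - Complex.I • Ay p))) * E p ∧
    (2⁻¹ : ℂ) • pdt E p + μ⁻¹ • pdzbar E p =
      ((2⁻¹ : ℂ) • (At p - Complex.I • Ph p) +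
        μ⁻¹ • ((2⁻¹ : ℂ) • (Ax p + Complex.I • Ay p))) * E p

/-- `F` solves the `λ`-linear system for `(A, φ)`. -/
def SolvesLam {n : ℕ} (Ax Ay At Ph : P3 → Mat n) (lm : ℂ) (F : P3 → Mat n) : Prop :=
  ∀ p : P3,
    lm • pdxi F p - pdy F p = (lm • (At p + Ax p) - (Ay p + Ph p)) * F p ∧
    lm⁻¹ • pdeta F p - pdy F p = (lm⁻¹ • (At p - Ax p) - (Ay p - Ph p)) * F p

/-- The simple-element `g_{α,π}(τ) = 1 + ((α−ᾱ)/(τ−α))·π^⊥`. -/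
def solg {n : ℕ} (a : ℂ) (Pr : P3 → Mat n) (p : P3) (τ : ℂ) : Mat n :=
  1 + ((a - conj a) / (τ - a)) • ((1 : Mat n) - Pr p)

/-- The inverse `g_{α,π}(τ)⁻¹ = 1 + ((ᾱ−α)/(τ−ᾱ))·π^⊥`. -/
def solginv {n : ℕ} (a : ℂ) (Pr : P3 → Mat n) (p : P3) (τ : ℂ) : Mat n :=
  1 + ((conj a - a) / (τ - conj a)) • ((1 : Mat n) - Pr p)

lemma curve_entry {n : ℕ} {f : ℝ → Mat n} {f' : Mat n} {s : ℝ} :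
    HasDerivAt f f' s ↔ ∀ i j, HasDerivAt (fun s => f s i j) (f' i j) s := by
  have h1 : HasDerivAt f f' s ↔ ∀ i, HasDerivAt (fun s => f s i) (f' i) s := hasDerivAt_pi
  rw [h1]
  exact forall_congr' fun i => hasDerivAt_pi

lemma curve_mul {n : ℕ} {f : ℝ → Mat n} {f' : Mat n} {s : ℝ} (h : HasDerivAt f f' s) :
    HasDerivAt (fun s => f s * f s) (f' * f s + f s * f') s := by
  rw [curve_entry] at h ⊢
  intro i j
  simp only [Matrix.mul_apply, Matrix.add_apply, ← Finset.sum_add_distrib]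
  exact HasDerivAt.fun_sum fun k _ => (h i k).mul (h k j)

lemma curve_idem {n : ℕ} {f : ℝ → Mat n} {s : ℝ} (h : DifferentiableAt ℝ f s)
    (hi : ∀ s, f s * f s = f s) : deriv f s * (1 - f s) = f s * deriv f s := by
  have h1 := curve_mul h.hasDerivAt
  simp only [hi] at h1
  have h2 := h1.unique h.hasDerivAt
  rw [mul_sub, mul_one]
  exact sub_eq_of_eq_add' h2.symm

lemma curve_herm {n : ℕ} {f : ℝ → Mat n} {s : ℝ} (h : DifferentiableAt ℝ f s)
    (hi : ∀ s, (f s)ᴴ = f s) : (deriv f s)ᴴ = deriv f s := by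
  have h1 : HasDerivAt (fun s => (f s)ᴴ) (deriv f s)ᴴ s := by
    have h0 := curve_entry.1 h.hasDerivAt
    refine curve_entry.2 ?_
    intro i j
    exact (h0 j i).star
  simp only [hi] at h1
  exact h1.unique h.hasDerivAt

lemma curve_solg_aux {n : ℕ} {f : ℝ → Mat n} {f' : Mat n} {s : ℝ} (h : HasDerivAt f f' s)
    (c : ℂ) : HasDerivAt (fun s => 1 + c • ((1 : Mat n) - f s)) (-(c • f')) s := by
  rw [curve_entry] at h ⊢
  intro i j
  have := (((h i j).const_sub ((1 : Mat n) i j)).const_mul c).const_add ((1 : Mat n) i j)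
  simpa using this

lemma curve_solg {n : ℕ} {f : ℝ → Mat n} {s : ℝ} (h : DifferentiableAt ℝ f s) (c : ℂ) :
    deriv (fun s => 1 + c • ((1 : Mat n) - f s)) s = -(c • deriv f s) :=
  (curve_solg_aux h.hasDerivAt c).deriv

lemma expr_eq {n : ℕ} (a b τ : ℂ) (h1 : τ - a ≠ 0) (h2 : τ - b ≠ 0) (R X Y : Mat n) :
    (τ • (-(((a - b) / (τ - a)) • Y)) - (-(((a - b) / (τ - a)) • X))) *
      (1 + ((b - a) / (τ - b)) • (1 - R)) =
    (b - a) • (Y + (τ - a)⁻¹ • ((a • Y - X) * R) + (τ - b)⁻¹ • ((b • Y - X) * (1 - R))) := by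
  simp only [mul_add, mul_sub, sub_mul, mul_one, smul_mul_assoc, mul_smul_comm, neg_mul]
  generalize Y * R = U
  generalize X * R = V
  match_scalars <;> field_simp <;> ring

lemma residue {n : ℕ} (a b : ℂ) (hab : a - b ≠ 0) (Y A B C : Mat n)
    (h : ∀ τ : ℂ, τ ≠ a → τ ≠ b → (b - a) • (Y + (τ - a)⁻¹ • A + (τ - b)⁻¹ • B) = C) :
    A = 0 := by
  have hk : ∀ k : ℂ, k ≠ 0 → k + 1 ≠ 0 → ∀ i j,
      (k * (a - b))⁻¹ * A i j + ((k + 1) * (a - b))⁻¹ * B i j = (b - a)⁻¹ * C i j - Y i j := by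
    intro k h0 h1 i j
    have hba : b - a ≠ 0 := by rw [← neg_sub]; exact neg_ne_zero.2 hab
    have e := h (a + k * (a - b)) (by simp [h0, hab]) (by
      rw [← sub_ne_zero]
      have : a + k * (a - b) - b = (k + 1) * (a - b) := by ring
      rw [this]; exact mul_ne_zero h1 hab)
    have e' := congrFun (congrFun e i) j
    have t1 : a + k * (a - b) - a = k * (a - b) := by ring
    have t2 : a + k * (a - b) - b = (k + 1) * (a - b) := by ring
    simp only [Matrix.smul_apply, Matrix.add_apply, smul_eq_mul, t1, t2] at e'
    rw [← e', inv_mul_cancel_left₀ hba]; ring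
  ext i j
  have e1 := hk 1 (by norm_num) (by norm_num) i j
  have e2 := hk 2 (by norm_num) (by norm_num) i j
  have e3 := hk 3 (by norm_num) (by norm_num) i j
  rw [← e1] at e2 e3
  norm_num [mul_inv] at e2 e3
  have hi : (a - b)⁻¹ ≠ 0 := inv_ne_zero hab
  have : (a - b)⁻¹ * A i j = 0 := by linear_combination -18 * e2 + 12 * e3
  simpa [hab] using this

lemma other_residue {n : ℕ} (a : ℂ) (R X Y : Mat n) (hR : Rᴴ = R) (hX : Xᴴ = X) (hY : Yᴴ = Y)
    (hXR : X * (1 - R) = R * X) (hYR : Y * (1 - R) = R * Y) (h : (a • Y - X) * R = 0) :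
    (conj a • Y - X) * (1 - R) = 0 := by
  have h1 := congrArg Matrix.conjTranspose h
  simp only [Matrix.conjTranspose_mul, Matrix.conjTranspose_sub, Matrix.conjTranspose_smul,
    hR, hX, hY, Matrix.conjTranspose_zero] at h1
  rw [sub_mul, smul_mul_assoc, hXR, hYR, ← mul_smul_comm, ← mul_sub]
  exact h1

lemma key {n : ℕ} (a : ℂ) (ha : a.im ≠ 0) (R X Y : Mat n) (hR : Rᴴ = R) (hX : Xᴴ = X)
    (hY : Yᴴ = Y) (hXR : X * (1 - R) = R * X) (hYR : Y * (1 - R) = R * Y) (C : Mat n) :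
    ((∀ τ : ℂ, τ ≠ a → τ ≠ conj a →
      (τ • (-(((a - conj a) / (τ - a)) • Y)) - (-(((a - conj a) / (τ - a)) • X))) *
      (1 + ((conj a - a) / (τ - conj a)) • (1 - R)) = C) → (a • Y - X) * R = 0) ∧
    ((a • Y - X) * R = 0 → ∀ τ : ℂ, τ ≠ a → τ ≠ conj a →
      (τ • (-(((a - conj a) / (τ - a)) • Y)) - (-(((a - conj a) / (τ - a)) • X))) *
      (1 + ((conj a - a) / (τ - conj a)) • (1 - R)) = (conj a - a) • Y) := by
  constructor
  · intro h
    refine residue a (conj a) ?_ Y _ ((conj a • Y - X) * (1 - R)) C ?_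
    · intro h0
      apply ha
      have := congrArg Complex.im h0
      simp at this
      linarith
    · intro τ h1 h2
      rw [← h τ h1 h2, expr_eq a _ τ (sub_ne_zero.2 h1) (sub_ne_zero.2 h2)]
  · intro h τ h1 h2
    rw [expr_eq a _ τ (sub_ne_zero.2 h1) (sub_ne_zero.2 h2), h,
      other_residue a R X Y hR hX hY hXR hYR h]
    simp

/-- `g_{α,π}` is a 1-soliton Ward frame, i.e. the expressions
`(τ∂_y g − ∂_ξ g)g⁻¹` and `(τ∂_η g − ∂_y g)g⁻¹` are independent of `τ`, iff `π` solves the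
1-soliton equations `(α∂_yπ − ∂_ξπ)π = 0` and `(α∂_ηπ − ∂_yπ)π = 0`. -/
theorem one_soliton_characterization {n : ℕ} (a : ℂ) (ha : a.im ≠ 0)
    (Pr : P3 → Mat n) (hPrs : ContDiff ℝ (⊤ : ℕ∞) Pr)
    (hherm : ∀ p : P3, (Pr p)ᴴ = Pr p) (hidem : ∀ p : P3, Pr p * Pr p = Pr p) :
    (∃ P Q : P3 → Mat n, ∀ τ : ℂ, τ ≠ a → τ ≠ conj a → ∀ p : P3,
        (τ • pdy (fun r => solg a Pr r τ) p - pdxi (fun r => solg a Pr r τ) p) *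
            solginv a Pr p τ = P p ∧
        (τ • pdeta (fun r => solg a Pr r τ) p - pdy (fun r => solg a Pr r τ) p) *
            solginv a Pr p τ = Q p) ↔
      (∀ p : P3, (a • pdy Pr p - pdxi Pr p) * Pr p = 0 ∧
        (a • pdeta Pr p - pdy Pr p) * Pr p = 0) := by
  have hd : Differentiable ℝ Pr := hPrs.differentiable (by simp)
  have dx : ∀ p : P3, DifferentiableAt ℝ (fun s : ℝ => Pr (s, p.2.1, p.2.2)) p.1 := fun p =>
    (hd (p.1, p.2.1, p.2.2)).comp p.1 (f := fun s : ℝ => (s, p.2.1, p.2.2)) (by fun_prop)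
  have dy : ∀ p : P3, DifferentiableAt ℝ (fun s : ℝ => Pr (p.1, s, p.2.2)) p.2.1 := fun p =>
    (hd (p.1, p.2.1, p.2.2)).comp p.2.1 (f := fun s : ℝ => (p.1, s, p.2.2)) (by fun_prop)
  have dt : ∀ p : P3, DifferentiableAt ℝ (fun s : ℝ => Pr (p.1, p.2.1, s)) p.2.2 := fun p =>
    (hd (p.1, p.2.1, p.2.2)).comp p.2.2 (f := fun s : ℝ => (p.1, p.2.1, s)) (by fun_prop)
  have gx : ∀ τ p, pdx (fun r => solg a Pr r τ) p = -(((a - conj a) / (τ - a)) • pdx Pr p) :=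
    fun τ p => curve_solg (dx p) _
  have gy : ∀ τ p, pdy (fun r => solg a Pr r τ) p = -(((a - conj a) / (τ - a)) • pdy Pr p) :=
    fun τ p => curve_solg (dy p) _
  have gt : ∀ τ p, pdt (fun r => solg a Pr r τ) p = -(((a - conj a) / (τ - a)) • pdt Pr p) :=
    fun τ p => curve_solg (dt p) _
  have gxi : ∀ τ p, pdxi (fun r => solg a Pr r τ) p =
      -(((a - conj a) / (τ - a)) • pdxi Pr p) := by
    intro τ p; simp only [pdxi, gx, gt, smul_add, neg_add]
  have geta : ∀ τ p, pdeta (fun r => solg a Pr r τ) p =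
      -(((a - conj a) / (τ - a)) • pdeta Pr p) := by
    intro τ p; simp only [pdeta, gx, gt, smul_sub]; abel
  have ex : ∀ p, (pdx Pr p)ᴴ = pdx Pr p := fun p => curve_herm (dx p) fun s => hherm _
  have ey : ∀ p, (pdy Pr p)ᴴ = pdy Pr p := fun p => curve_herm (dy p) fun s => hherm _
  have et : ∀ p, (pdt Pr p)ᴴ = pdt Pr p := fun p => curve_herm (dt p) fun s => hherm _
  have exi : ∀ p, (pdxi Pr p)ᴴ = pdxi Pr p := fun p => by
    simp only [pdxi, Matrix.conjTranspose_add, ex, et]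
  have eeta : ∀ p, (pdeta Pr p)ᴴ = pdeta Pr p := fun p => by
    simp only [pdeta, Matrix.conjTranspose_sub, ex, et]
  have ix : ∀ p, pdx Pr p * (1 - Pr p) = Pr p * pdx Pr p :=
    fun p => curve_idem (dx p) fun s => hidem _
  have iy : ∀ p, pdy Pr p * (1 - Pr p) = Pr p * pdy Pr p :=
    fun p => curve_idem (dy p) fun s => hidem _
  have it : ∀ p, pdt Pr p * (1 - Pr p) = Pr p * pdt Pr p :=
    fun p => curve_idem (dt p) fun s => hidem _
  have ixi : ∀ p, pdxi Pr p * (1 - Pr p) = Pr p * pdxi Pr p := fun p => by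
    rw [pdxi, add_mul, ix, it, mul_add]
  have ieta : ∀ p, pdeta Pr p * (1 - Pr p) = Pr p * pdeta Pr p := fun p => by
    rw [pdeta, sub_mul, ix, it, mul_sub]
  simp only [gy, gxi, geta, solginv]
  have K1 := fun p => key a ha (Pr p) (pdxi Pr p) (pdy Pr p) (hherm p) (exi p) (ey p) (ixi p) (iy p)
  have K2 := fun p => key a ha (Pr p) (pdy Pr p) (pdeta Pr p) (hherm p) (ey p) (eeta p) (iy p)
    (ieta p)
  constructor
  · rintro ⟨P, Q, h⟩ p
    exact ⟨(K1 p (P p)).1 fun τ h1 h2 => (h τ h1 h2 p).1,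
      (K2 p (Q p)).1 fun τ h1 h2 => (h τ h1 h2 p).2⟩
  · intro h
    exact ⟨fun p => (conj a - a) • pdy Pr p, fun p => (conj a - a) • pdeta Pr p,
      fun τ h1 h2 p => ⟨(K1 p 0).2 (h p).1 τ h1 h2, (K2 p 0).2 (h p).2 τ h1 h2⟩⟩
end
end

section
/- (Algebraic Bäcklund transformation.) Let Σ ⊂ ℂ be a finite set closed under conjugation, α ∈ ℂ∖ℝ with α, ᾱ ∉ Σ, and let ψ : ℝ³ × (ℂ∖Σ) → GL(n,ℂ) be a Ward frame on ℂ∖Σ with coefficient maps P, Q (so ψ is smooth, holomorphic in τ, τ∂_yψ − ∂_ξψ = Pψ, τ∂_ηψ − ∂_yψ = Qψ for all τ ∉ Σ, and ψ(x,y,t,τ̄)*ψ(x,y,t,τ) = 1). Let π : ℝ³ → M_n(ℂ) be a smooth Hermitian-projection-valued map satisfying the 1-soliton equations (α∂_yπ − ∂_ξπ)π = 0 and (α∂_ηπ − ∂_yπ)π = 0, and let π̃(x,y,t) be the Hermitian (orthogonal) projection of ℂⁿ onto the subspace ψ(x,y,t,α)(range π(x,y,t)). Then: (0) π̃ is smooth;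 (1) ψ̃ := g_{α,π̃}·ψ·g_{α,π}⁻¹ extends holomorphically in τ to τ = α and τ = ᾱ with invertible values there; (2) ψ₁ := g_{α,π̃}·ψ is a Ward frame on (ℂ∖Σ)∖{α,ᾱ}: it satisfies ψ₁(x,y,t,τ̄)*ψ₁(x,y,t,τ) = 1 and τ∂_yψ₁ − ∂_ξψ₁ = (P + (ᾱ−α)∂_yπ̃)ψ₁, τ∂_ηψ₁ − ∂_yψ₁ = (Q + (ᾱ−α)∂_ηπ̃)ψ₁ for all τ in its domain. -/
open Matrix Complex
open scoped Matrix ComplexConjugate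

attribute [local instance] Matrix.normedAddCommGroup Matrix.normedSpace

noncomputable section

section helpers

variable {n : ℕ}

lemma bt_pdx {f : P3 → Mat n} {p : P3} (hf : DifferentiableAt ℝ f p) :
    pdx f p = fderiv ℝ f p (1, 0, 0) := by
  have h : HasDerivAt (fun s : ℝ => ((s, p.2.1, p.2.2) : P3)) (1, 0, 0) p.1 :=
    (hasDerivAt_id _).prodMk (hasDerivAt_const _ _)
  exact (hf.hasFDerivAt.comp_hasDerivAt p.1 h).deriv

lemma bt_pdy {f : P3 → Mat n} {p : P3} (hf : DifferentiableAt ℝ f p) :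
    pdy f p = fderiv ℝ f p (0, 1, 0) := by
  have h : HasDerivAt (fun s : ℝ => ((p.1, s, p.2.2) : P3)) (0, 1, 0) p.2.1 :=
    (hasDerivAt_const _ _).prodMk ((hasDerivAt_id _).prodMk (hasDerivAt_const _ _))
  exact (hf.hasFDerivAt.comp_hasDerivAt p.2.1 h).deriv

lemma bt_pdt {f : P3 → Mat n} {p : P3} (hf : DifferentiableAt ℝ f p) :
    pdt f p = fderiv ℝ f p (0, 0, 1) := by
  have h : HasDerivAt (fun s : ℝ => ((p.1, p.2.1, s) : P3)) (0, 0, 1) p.2.2 :=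
    (hasDerivAt_const _ _).prodMk ((hasDerivAt_const _ _).prodMk (hasDerivAt_id _))
  exact (hf.hasFDerivAt.comp_hasDerivAt p.2.2 h).deriv

lemma bt_pdxi {f : P3 → Mat n} {p : P3} (hf : DifferentiableAt ℝ f p) :
    pdxi f p = fderiv ℝ f p (1, 0, 1) := by
  rw [pdxi, bt_pdx hf, bt_pdt hf, ← map_add]; simp

lemma bt_pdeta {f : P3 → Mat n} {p : P3} (hf : DifferentiableAt ℝ f p) :
    pdeta f p = fderiv ℝ f p (-1, 0, 1) := by
  rw [pdeta, bt_pdx hf, bt_pdt hf, ← map_sub]; simp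


/-- Matrix multiplication as a continuous bilinear map over the reals. -/
def btMulR (n : ℕ) : Mat n →L[ℝ] Mat n →L[ℝ] Mat n :=
  (LinearMap.mul ℝ (Mat n)).toContinuousBilinearMap

/-- Matrix multiplication as a continuous bilinear map over the complex numbers. -/
def btMulC (n : ℕ) : Mat n →L[ℂ] Mat n →L[ℂ] Mat n :=
  (LinearMap.mul ℂ (Mat n)).toContinuousBilinearMap

/-- Conjugate transpose as a continuous real linear map. -/
def btStar (n : ℕ) : Mat n →L[ℝ] Mat n :=
  LinearMap.toContinuousLinearMap
    { toFun := fun X => Xᴴ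
      map_add' := fun X Y => conjTranspose_add X Y
      map_smul' := fun c X => by
        ext i j; simp [conjTranspose_apply] }

lemma bt_cd_mul {E : Type*} [NormedAddCommGroup E] [NormedSpace ℝ E] {f g : E → Mat n}
    (hf : ContDiff ℝ (⊤ : ℕ∞) f) (hg : ContDiff ℝ (⊤ : ℕ∞) g) :
    ContDiff ℝ (⊤ : ℕ∞) (fun r => f r * g r) :=
  (btMulR n).isBoundedBilinearMap.contDiff.comp (hf.prodMk hg)

lemma bt_cd_star {E : Type*} [NormedAddCommGroup E] [NormedSpace ℝ E] {f : E → Mat n}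
    (hf : ContDiff ℝ (⊤ : ℕ∞) f) :
    ContDiff ℝ (⊤ : ℕ∞) (fun r => (f r)ᴴ) :=
  (btStar n).contDiff.comp hf

lemma bt_fd_mul {f g : P3 → Mat n} {p : P3}
    (hf : DifferentiableAt ℝ f p) (hg : DifferentiableAt ℝ g p) (v : P3) :
    fderiv ℝ (fun r => f r * g r) p v = fderiv ℝ f p v * g p + f p * fderiv ℝ g p v := by
  have h := ((btMulR n).hasFDerivAt_of_bilinear hf.hasFDerivAt hg.hasFDerivAt).fderiv
  exact (DFunLike.congr_fun h v).trans (add_comm _ _)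

lemma bt_fd_star {f : P3 → Mat n} {p : P3} (hf : DifferentiableAt ℝ f p) (v : P3) :
    fderiv ℝ (fun r => (f r)ᴴ) p v = (fderiv ℝ f p v)ᴴ := by
  have h := ((btStar n).hasFDerivAt.comp p hf.hasFDerivAt).fderiv
  exact DFunLike.congr_fun h v

lemma bt_cd_apply {E : Type*} [NormedAddCommGroup E] [NormedSpace ℝ E] {f : E → Mat n}
    (hf : ContDiff ℝ (⊤ : ℕ∞) f) (i j : Fin n) : ContDiff ℝ (⊤ : ℕ∞) (fun r => f r i j) :=
  contDiff_pi.1 (contDiff_pi.1 hf i) j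

lemma bt_cd_det {E : Type*} [NormedAddCommGroup E] [NormedSpace ℝ E] {f : E → Mat n}
    (hf : ∀ i j, ContDiff ℝ (⊤ : ℕ∞) (fun r => f r i j)) :
    ContDiff ℝ (⊤ : ℕ∞) (fun r => (f r).det) := by
  simp only [Matrix.det_apply']
  refine ContDiff.sum fun σ _ => contDiff_const.mul ?_
  exact contDiff_prod fun i _ => hf _ _

lemma bt_cd_inv {E : Type*} [NormedAddCommGroup E] [NormedSpace ℝ E] {f : E → Mat n}
    (hf : ContDiff ℝ (⊤ : ℕ∞) f) (hu : ∀ r, IsUnit (f r)) :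
    ContDiff ℝ (⊤ : ℕ∞) (fun r => (f r)⁻¹) := by
  refine contDiff_pi.2 fun i => contDiff_pi.2 fun j => ?_
  have h0 : ∀ r, (f r).det ≠ 0 := fun r =>
    ((Matrix.isUnit_iff_isUnit_det _).1 (hu r)).ne_zero
  have e : (fun r => (f r)⁻¹ i j) = fun r => ((f r).det)⁻¹ * (f r).adjugate i j := by
    funext r
    rw [Matrix.inv_def, Matrix.smul_apply, Ring.inverse_eq_inv', smul_eq_mul]
  rw [e]
  refine ((bt_cd_det (bt_cd_apply hf)).inv h0).mul ?_
  simp only [Matrix.adjugate_apply]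
  refine bt_cd_det fun k l => ?_
  simp only [Matrix.updateRow_apply]
  split_ifs
  · exact contDiff_const
  · exact bt_cd_apply hf _ _

lemma bt_da_mul {f g : ℂ → Mat n} {z : ℂ}
    (hf : DifferentiableAt ℂ f z) (hg : DifferentiableAt ℂ g z) :
    DifferentiableAt ℂ (fun r => f r * g r) z :=
  ((btMulC n).hasFDerivAt_of_bilinear hf.hasFDerivAt hg.hasFDerivAt).differentiableAt

open scoped ComplexOrder in
/-- The orthogonal projection with the same range as an idempotent. -/
lemma bt_proj_formula {E p : Mat n} (hp : pᴴ = p) (h1 : p * E = E) (h2 : E * p = p) :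
    IsUnit (E + Eᴴ - 1) ∧ p = E * (E + Eᴴ - 1)⁻¹ := by
  have hE : E * E = E := by
    calc E * E = E * (p * E) := by rw [h1]
      _ = (E * p) * E := by rw [mul_assoc]
      _ = E := by rw [h2, h1]
  have hE' : Eᴴ * Eᴴ = Eᴴ := by rw [← conjTranspose_mul, hE]
  have h2' : p * Eᴴ = p := by
    have := congrArg conjTranspose h2
    rwa [conjTranspose_mul, hp] at this
  have hsq : (E + Eᴴ - 1) * (E + Eᴴ - 1) = 1 + (E - Eᴴ) * (E - Eᴴ)ᴴ := by
    rw [conjTranspose_sub, conjTranspose_conjTranspose]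
    simp only [mul_add, add_mul, mul_sub, sub_mul, hE, hE', mul_one, one_mul]
    abel
  have hpd : (1 + (E - Eᴴ) * (E - Eᴴ)ᴴ).PosDef :=
    Matrix.PosDef.one.add_posSemidef (posSemidef_self_mul_conjTranspose _)
  have hu : IsUnit (E + Eᴴ - 1) := by
    have h := hpd.isUnit
    rw [← hsq, Matrix.isUnit_iff_isUnit_det, Matrix.det_mul] at h
    exact (Matrix.isUnit_iff_isUnit_det _).2 (isUnit_of_mul_isUnit_left h)
  refine ⟨hu, ?_⟩
  have h3 : p * (E + Eᴴ - 1) = E := by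
    rw [mul_sub, mul_add, h1, h2', mul_one]; abel
  calc p = p * (E + Eᴴ - 1) * (E + Eᴴ - 1)⁻¹ := by
        rw [mul_assoc, Matrix.mul_nonsing_inv _ ((Matrix.isUnit_iff_isUnit_det _).1 hu), mul_one]
    _ = _ := by rw [h3]

lemma bt_range {A B p q : Mat n} (hBA : B * A = 1) (hp : p * p = p) (hq : q * q = q)
    (h : LinearMap.range (Matrix.mulVecLin q) =
      Submodule.map (Matrix.mulVecLin A) (LinearMap.range (Matrix.mulVecLin p))) :
    q * (A * p) = A * p ∧ p * (B * q) = B * q := by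
  constructor
  · refine Matrix.ext_of_mulVec_single fun i => ?_
    have hm : A *ᵥ (p *ᵥ Pi.single i 1) ∈ LinearMap.range (Matrix.mulVecLin q) := by
      rw [h]
      exact ⟨_, ⟨_, rfl⟩, rfl⟩
    obtain ⟨w, hw⟩ := hm
    rw [Matrix.mulVecLin_apply] at hw
    rw [← Matrix.mulVec_mulVec, ← Matrix.mulVec_mulVec, ← hw, Matrix.mulVec_mulVec, hq]
  · refine Matrix.ext_of_mulVec_single fun i => ?_
    have hm : q *ᵥ Pi.single i 1 ∈ LinearMap.range (Matrix.mulVecLin q) := ⟨_, rfl⟩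
    rw [h] at hm
    obtain ⟨_, ⟨w, rfl⟩, hw⟩ := hm
    simp only [Matrix.mulVecLin_apply] at hw
    rw [← Matrix.mulVec_mulVec, ← Matrix.mulVec_mulVec, ← hw, Matrix.mulVec_mulVec _ B, hBA,
      Matrix.one_mulVec, Matrix.mulVec_mulVec, hp]

lemma bt_alg1 {A B p q P T S : Mat n} (hAB : A * B = 1) (hpB : p * (B * q) = B * q)
    (hT : T * p = 0)
    (h : S * (A * p) + q * (P * A * p + A * T) = P * A * p + A * T) :
    S * q = P * q - q * P * q := by
  have e1 : A * p * (B * q) = q := by rw [mul_assoc, hpB, ← mul_assoc, hAB, one_mul]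
  have e2 : T * (B * q) = 0 := by rw [← hpB, ← mul_assoc, hT, zero_mul]
  have h' := congrArg (· * (B * q)) h
  simp only [add_mul, mul_add, mul_assoc] at h'
  simp only [mul_assoc] at e1
  simp only [e1, e2, mul_zero, add_zero] at h'
  rw [eq_sub_iff_add_eq, mul_assoc]
  exact h'

/-- The zero-curvature part of the argument along a pair of directions. -/
lemma bt_key {a : ℂ} {ψa ψb : P3 → Mat n} {Pr Prt : P3 → Mat n} {P : Mat n} {p : P3} {v w : P3}
    (dA : Differentiable ℝ ψa) (dB : Differentiable ℝ ψb)
    (dP : Differentiable ℝ Pr) (dT : Differentiable ℝ Prt)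
    (hBA : ∀ r, (ψb r)ᴴ * ψa r = 1)
    (hA : a • fderiv ℝ ψa p v - fderiv ℝ ψa p w = P * ψa p)
    (hB : conj a • fderiv ℝ ψb p v - fderiv ℝ ψb p w = P * ψb p)
    (hsol : (a • fderiv ℝ Pr p v - fderiv ℝ Pr p w) * Pr p = 0)
    (hher : ∀ r, (Prt r)ᴴ = Prt r) (hid : ∀ r, Prt r * Prt r = Prt r)
    (h1 : ∀ r, Prt r * (ψa r * Pr r) = ψa r * Pr r)
    (h2 : ∀ r, Pr r * ((ψb r)ᴴ * Prt r) = (ψb r)ᴴ * Prt r) :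
    a • fderiv ℝ Prt p v - fderiv ℝ Prt p w
      = P * Prt p - Prt p * P + (a - conj a) • (fderiv ℝ Prt p v * (1 - Prt p)) := by
  have hAB : ∀ r, ψa r * (ψb r)ᴴ = 1 := fun r => mul_eq_one_comm.1 (hBA r)
  -- `P` is anti-Hermitian
  have hBs : Differentiable ℝ (fun r => (ψb r)ᴴ) := fun r =>
    ((btStar n).differentiableAt.comp r (dB r))
  have hPs : Pᴴ = -P := by
    have e : ∀ u, (fderiv ℝ ψb p u)ᴴ * ψa p + (ψb p)ᴴ * fderiv ℝ ψa p u = 0 := by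
      intro u
      have := bt_fd_mul (hBs p) (dA p) u
      rw [bt_fd_star (dB p)] at this
      rw [← this]
      have : (fun r => (ψb r)ᴴ * ψa r) = fun _ => (1 : Mat n) := funext hBA
      rw [this]
      simp
    have hB' := congrArg conjTranspose hB
    rw [conjTranspose_sub, conjTranspose_smul, conjTranspose_mul] at hB'
    simp only [RCLike.star_def, Complex.conj_conj] at hB'
    have : (ψb p)ᴴ * (Pᴴ + P) * ψa p = 0 := by
      rw [mul_add, add_mul, mul_assoc _ P, ← hA, ← hB']
      simp only [mul_sub, sub_mul, smul_mul_assoc, mul_smul_comm]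
      have hv := congrArg (a • ·) (e v)
      have hw := e w
      simp only [smul_add, smul_zero] at hv
      rw [sub_add_sub_comm, hv, hw, sub_zero]
    have h3 : ψa p * ((ψb p)ᴴ * (Pᴴ + P) * ψa p) * (ψb p)ᴴ = Pᴴ + P := by
      have : ψa p * ((ψb p)ᴴ * (Pᴴ + P) * ψa p) * (ψb p)ᴴ
        = (ψa p * (ψb p)ᴴ) * (Pᴴ + P) * (ψa p * (ψb p)ᴴ) := by simp only [mul_assoc]
      rw [this, hAB, one_mul, mul_one]
    rw [this, mul_zero, zero_mul] at h3
    exact eq_neg_of_add_eq_zero_left h3.symm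
  have dAP : Differentiable ℝ (fun r => ψa r * Pr r) := fun r =>
    ((btMulR n).hasFDerivAt_of_bilinear (dA r).hasFDerivAt (dP r).hasFDerivAt).differentiableAt
  have e : ∀ u, fderiv ℝ Prt p u * (ψa p * Pr p) + Prt p * (fderiv ℝ ψa p u * Pr p +
      ψa p * fderiv ℝ Pr p u) = fderiv ℝ ψa p u * Pr p + ψa p * fderiv ℝ Pr p u := by
    intro u
    rw [← bt_fd_mul (dA p) (dP p) u, ← bt_fd_mul (dT p) (dAP p) u]
    have : (fun r => Prt r * (ψa r * Pr r)) = fun r => ψa r * Pr r := funext h1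
    rw [this]
  have k1 : (a • fderiv ℝ Prt p v - fderiv ℝ Prt p w) * Prt p
      = P * Prt p - Prt p * P * Prt p := by
    refine bt_alg1 (T := a • fderiv ℝ Pr p v - fderiv ℝ Pr p w) (hAB p) (h2 p) hsol ?_
    rw [← hA]
    have hv := congrArg (a • ·) (e v)
    have hvw := congrArg₂ (· - ·) hv (e w)
    simp only [smul_add, ← smul_mul_assoc] at hvw
    calc _ = _ := ?_
      _ = _ := hvw
      _ = _ := ?_
    · simp only [mul_sub, sub_mul, mul_add, smul_mul_assoc, mul_smul_comm]; abel
    · simp only [mul_sub, sub_mul, mul_add, smul_mul_assoc, mul_smul_comm]; abel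
  have hs : ∀ u, (fderiv ℝ Prt p u)ᴴ = fderiv ℝ Prt p u := by
    intro u
    rw [← bt_fd_star (dT p)]
    have : (fun r => (Prt r)ᴴ) = Prt := funext hher
    rw [this]
  have hi : ∀ u, Prt p * fderiv ℝ Prt p u = fderiv ℝ Prt p u * (1 - Prt p) := by
    intro u
    have h := bt_fd_mul (dT p) (dT p) u
    have : (fun r => Prt r * Prt r) = Prt := funext hid
    rw [this] at h
    rw [mul_sub, mul_one, eq_sub_iff_add_eq, add_comm]
    exact h.symm
  have k2 : (conj a • fderiv ℝ Prt p v - fderiv ℝ Prt p w) * (1 - Prt p)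
      = - (Prt p * P) + Prt p * P * Prt p := by
    have h := congrArg conjTranspose k1
    simp only [conjTranspose_sub, conjTranspose_smul, conjTranspose_mul, hs, hher, hPs,
      RCLike.star_def] at h
    rw [mul_sub, mul_smul_comm, hi, hi] at h
    rw [sub_mul, smul_mul_assoc, h]
    simp only [mul_neg, neg_mul, mul_assoc]
    abel
  generalize fderiv ℝ Prt p v = X at *
  generalize fderiv ℝ Prt p w = Y at *
  generalize Prt p = q at *
  have : a • X - Y = (a • X - Y) * q + (conj a • X - Y) * (1 - q)
      + (a - conj a) • (X * (1 - q)) := by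
    simp only [sub_mul, mul_sub, sub_smul, smul_mul_assoc, mul_one, smul_sub]
    abel
  rw [this, k1, k2]
  abel

lemma bt_frame {a τ : ℂ} (hτ : τ ≠ a) {f Prt : P3 → Mat n} {P : Mat n} {p v w : P3}
    (df : Differentiable ℝ f) (dT : Differentiable ℝ Prt)
    (hf : τ • fderiv ℝ f p v - fderiv ℝ f p w = P * f p)
    (hk : a • fderiv ℝ Prt p v - fderiv ℝ Prt p w
      = P * Prt p - Prt p * P + (a - conj a) • (fderiv ℝ Prt p v * (1 - Prt p))) :
    τ • fderiv ℝ (fun r => solg a Prt r τ * f r) p v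
      - fderiv ℝ (fun r => solg a Prt r τ * f r) p w
      = (P + (conj a - a) • fderiv ℝ Prt p v) * (solg a Prt p τ * f p) := by
  set c : ℂ := (a - conj a) / (τ - a) with hc
  have hg : HasFDerivAt (fun r => solg a Prt r τ) (-(c • fderiv ℝ Prt p)) p := by
    have := (((dT p).hasFDerivAt.const_sub (1 : Mat n)).const_smul c).const_add (1 : Mat n)
    exact this.congr_fderiv (ContinuousLinearMap.ext fun u => smul_neg c (fderiv ℝ Prt p u))
  have hu : ∀ u, fderiv ℝ (fun r => solg a Prt r τ * f r) p u
      = -(c • fderiv ℝ Prt p u) * f p + solg a Prt p τ * fderiv ℝ f p u := by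
    intro u
    rw [bt_fd_mul hg.differentiableAt (df p), hg.fderiv]
    rfl
  rw [hu, hu]
  have hct : c * τ = c * a + (a - conj a) := by
    have : τ - a ≠ 0 := sub_ne_zero.2 hτ
    rw [hc]; field_simp; ring
  have hsg : solg a Prt p τ = 1 + c • (1 - Prt p) := rfl
  have e1 : τ • (-(c • fderiv ℝ Prt p v) * f p + solg a Prt p τ * fderiv ℝ f p v)
      - (-(c • fderiv ℝ Prt p w) * f p + solg a Prt p τ * fderiv ℝ f p w)
      = (-(c • (a • fderiv ℝ Prt p v - fderiv ℝ Prt p w)) - (a - conj a) • fderiv ℝ Prt p v) * f p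
        + solg a Prt p τ * (τ • fderiv ℝ f p v - fderiv ℝ f p w) := by
    have : τ • (c • fderiv ℝ Prt p v) = (c * a) • fderiv ℝ Prt p v
        + (a - conj a) • fderiv ℝ Prt p v := by
      rw [smul_smul, mul_comm, hct, add_smul]
    rw [smul_add, ← smul_mul_assoc, smul_neg, this]
    simp only [smul_sub, smul_smul, sub_mul, mul_sub, neg_mul, add_mul, mul_smul_comm, neg_add,
      neg_sub]
    abel
  rw [e1, hf, hk, hsg]
  generalize fderiv ℝ Prt p v = X
  generalize Prt p = q
  generalize f p = F
  rw [← mul_assoc, ← mul_assoc, ← add_mul]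
  congr 1
  have : conj a - a = -(a - conj a) := by ring
  rw [this]
  generalize a - conj a = d
  rw [neg_smul]
  simp only [mul_add, add_mul, mul_sub, sub_mul, smul_sub, smul_add, smul_mul_assoc, mul_smul_comm,
    smul_neg, neg_mul, mul_one, one_mul, smul_comm c d]
  abel

lemma bt_g_mul {q : Mat n} (hq : q * q = q) {a b τ : ℂ} (h1 : τ ≠ a) (h2 : τ ≠ b) :
    (1 + ((b - a) / (τ - b)) • ((1 : Mat n) - q)) * (1 + ((a - b) / (τ - a)) • ((1 : Mat n) - q))
      = 1 := by
  have hqq : ((1 : Mat n) - q) * (1 - q) = 1 - q := by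
    simp only [mul_sub, sub_mul, mul_one, one_mul, hq]; abel
  have h1' := sub_ne_zero.2 h1
  have h2' := sub_ne_zero.2 h2
  have hz : (b - a) / (τ - b) + (a - b) / (τ - a) + (b - a) / (τ - b) * ((a - b) / (τ - a)) = 0 := by
    field_simp; ring
  rw [mul_add, add_mul, add_mul, smul_mul_smul_comm, hqq, mul_one, one_mul, mul_one, add_assoc,
    ← add_assoc (_ • _), ← add_smul, ← add_smul]
  rw [hz, zero_smul, add_zero]

lemma bt_g_star {q : P3 → Mat n} (hq : ∀ r, (q r)ᴴ = q r) (a τ : ℂ) (p : P3) :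
    (solg a q p (conj τ))ᴴ = solginv a q p τ := by
  simp [solg, solginv, conjTranspose_add, conjTranspose_smul, hq]

lemma bt_ginv_star {q : P3 → Mat n} (hq : ∀ r, (q r)ᴴ = q r) (a τ : ℂ) (p : P3) :
    (solginv a q p (conj τ))ᴴ = solg a q p τ := by
  simp [solg, solginv, conjTranspose_add, conjTranspose_smul, hq]

lemma bt_ginv_g {q : P3 → Mat n} (hq : ∀ r, q r * q r = q r) {a τ : ℂ} (p : P3)
    (h1 : τ ≠ a) (h2 : τ ≠ conj a) : solginv a q p τ * solg a q p τ = 1 :=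
  bt_g_mul (hq p) h1 h2

lemma bt_g_ginv {q : P3 → Mat n} (hq : ∀ r, q r * q r = q r) {a τ : ℂ} (p : P3)
    (h1 : τ ≠ a) (h2 : τ ≠ conj a) : solg a q p τ * solginv a q p τ = 1 :=
  bt_g_mul (hq p) h2 h1

lemma bt_da_g (c d : ℂ) (X : Mat n) {τ : ℂ} (h : τ ≠ c) :
    DifferentiableAt ℂ (fun s => (1 : Mat n) + (d / (s - c)) • X) τ := by
  have : DifferentiableAt ℂ (fun s : ℂ => d / (s - c)) τ :=
    (differentiableAt_const _).div (differentiableAt_id.sub_const _) (sub_ne_zero.2 h)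
  exact (this.smul_const X).const_add _

/-- Removable singularity: a simple pole times a function with a zero. -/
lemma bt_dslope {h : ℂ → Mat n} {c : ℂ} (hh : ∀ᶠ z in nhds c, DifferentiableAt ℂ h z) :
    DifferentiableAt ℂ (dslope h c) c := by
  have hs : {z | DifferentiableAt ℂ h z} ∈ nhds c := hh
  refine ((Complex.differentiableOn_dslope hs).2 ?_).differentiableAt hs
  exact fun z hz => hz.differentiableWithinAt

end helpers

/-- **Algebraic Bäcklund transformation.**
Given a Ward frame `ψ` on `ℂ∖Σ` with coefficients `P`, `Q`, a 1-soliton projection `π`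
with pole `α`, and `π̃` the Hermitian projection onto `ψ(·,α)(range π)`:
(0) `π̃` is smooth; (1) `ψ̃ = g_{α,π̃}·ψ·g_{α,π}⁻¹` extends holomorphically and invertibly
to `τ = α, ᾱ`; (2) `ψ₁ = g_{α,π̃}·ψ` is again a Ward frame, with coefficients
`P + (ᾱ−α)∂_yπ̃` and `Q + (ᾱ−α)∂_ηπ̃`. -/
theorem algebraic_backlund_transformation {n : ℕ} (Sg : Finset ℂ)
    (hSgc : ∀ z ∈ Sg, conj z ∈ Sg)
    (a : ℂ) (ha : a.im ≠ 0) (haSg : a ∉ Sg) (hacSg : conj a ∉ Sg)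
    (ψ : P3 → ℂ → Mat n)
    (hψs : ContDiffOn ℝ (⊤ : ℕ∞) (fun q : P3 × ℂ => ψ q.1 q.2) {q : P3 × ℂ | q.2 ∉ Sg})
    (hψhol : ∀ (p : P3) (τ : ℂ), τ ∉ Sg → DifferentiableAt ℂ (ψ p) τ)
    (hψgl : ∀ (p : P3) (τ : ℂ), τ ∉ Sg → IsUnit (ψ p τ))
    (P Q : P3 → Mat n) (hPs : ContDiff ℝ (⊤ : ℕ∞) P) (hQs : ContDiff ℝ (⊤ : ℕ∞) Q)
    (heq : ∀ τ : ℂ, τ ∉ Sg → ∀ p : P3,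
      τ • pdy (fun r => ψ r τ) p - pdxi (fun r => ψ r τ) p = P p * ψ p τ ∧
      τ • pdeta (fun r => ψ r τ) p - pdy (fun r => ψ r τ) p = Q p * ψ p τ)
    (hreal : ∀ τ : ℂ, τ ∉ Sg → ∀ p : P3, (ψ p (conj τ))ᴴ * ψ p τ = 1)
    (Pr : P3 → Mat n) (hPrs : ContDiff ℝ (⊤ : ℕ∞) Pr)
    (hherm : ∀ p : P3, (Pr p)ᴴ = Pr p) (hidem : ∀ p : P3, Pr p * Pr p = Pr p)
    (hsol : ∀ p : P3, (a • pdy Pr p - pdxi Pr p) * Pr p = 0 ∧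
      (a • pdeta Pr p - pdy Pr p) * Pr p = 0)
    (Prt : P3 → Mat n)
    (hPrtherm : ∀ p : P3, (Prt p)ᴴ = Prt p) (hPrtidem : ∀ p : P3, Prt p * Prt p = Prt p)
    (hPrtrange : ∀ p : P3, LinearMap.range (Matrix.mulVecLin (Prt p)) =
      Submodule.map (Matrix.mulVecLin (ψ p a)) (LinearMap.range (Matrix.mulVecLin (Pr p)))) :
    ContDiff ℝ (⊤ : ℕ∞) Prt ∧
    (∃ Ψ : P3 → ℂ → Mat n,
      (∀ (p : P3) (τ : ℂ), τ ∉ Sg → τ ≠ a → τ ≠ conj a →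
        Ψ p τ = solg a Prt p τ * ψ p τ * solginv a Pr p τ) ∧
      (∀ p : P3, DifferentiableAt ℂ (Ψ p) a ∧ DifferentiableAt ℂ (Ψ p) (conj a) ∧
        IsUnit (Ψ p a) ∧ IsUnit (Ψ p (conj a)))) ∧
    (∀ τ : ℂ, τ ∉ Sg → τ ≠ a → τ ≠ conj a → ∀ p : P3,
      (solg a Prt p (conj τ) * ψ p (conj τ))ᴴ * (solg a Prt p τ * ψ p τ) = 1 ∧
      τ • pdy (fun r => solg a Prt r τ * ψ r τ) p -
          pdxi (fun r => solg a Prt r τ * ψ r τ) p =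
        (P p + (conj a - a) • pdy Prt p) * (solg a Prt p τ * ψ p τ) ∧
      τ • pdeta (fun r => solg a Prt r τ * ψ r τ) p -
          pdy (fun r => solg a Prt r τ * ψ r τ) p =
        (Q p + (conj a - a) • pdeta Prt p) * (solg a Prt p τ * ψ p τ)) := by
  have hψC : ∀ τ : ℂ, τ ∉ Sg → ContDiff ℝ (⊤ : ℕ∞) (fun r => ψ r τ) := by
    intro τ hτ
    have h : ContDiff ℝ (⊤ : ℕ∞) (fun r : P3 => (r, τ)) := contDiff_id.prodMk contDiff_const
    exact contDiffOn_univ.1 (hψs.comp h.contDiffOn (fun r _ => hτ))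
  have hψD : ∀ τ : ℂ, τ ∉ Sg → Differentiable ℝ (fun r => ψ r τ) := fun τ hτ =>
    (hψC τ hτ).differentiable (by simp)
  have hBA : ∀ r, (ψ r (conj a))ᴴ * ψ r a = 1 := hreal a haSg
  have hAB : ∀ r, ψ r a * (ψ r (conj a))ᴴ = 1 := fun r => mul_eq_one_comm.1 (hBA r)
  have hr := fun r => bt_range (hBA r) (hidem r) (hPrtidem r) (hPrtrange r)
  have hform := fun r => bt_proj_formula (E := ψ r a * Pr r * (ψ r (conj a))ᴴ) (hPrtherm r)
    (by rw [← mul_assoc, (hr r).1])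
    (by rw [mul_assoc, mul_assoc, (hr r).2, ← mul_assoc, hAB, one_mul])
  have hT : ContDiff ℝ (⊤ : ℕ∞) Prt := by
    have hE : ContDiff ℝ (⊤ : ℕ∞) (fun r => ψ r a * Pr r * (ψ r (conj a))ᴴ) :=
      bt_cd_mul (bt_cd_mul (hψC a haSg) hPrs) (bt_cd_star (hψC _ hacSg))
    have hS := (hE.add (bt_cd_star hE)).sub (contDiff_const (c := (1 : Mat n)))
    have := bt_cd_mul hE (bt_cd_inv hS (fun r => (hform r).1))
    have e : Prt = _ := funext fun r => (hform r).2
    rw [e]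
    exact this
  have dT : Differentiable ℝ Prt := hT.differentiable (by simp)
  have dP : Differentiable ℝ Pr := hPrs.differentiable (by simp)
  have hne : a ≠ conj a := fun h => ha (Complex.conj_eq_iff_im.1 h.symm)
  have hd0 : a - conj a ≠ 0 := sub_ne_zero.2 hne
  have hnb : ∀ c : ℂ, c ∉ Sg → ∀ᶠ z in nhds c, z ∉ Sg := fun c hc =>
    (Sg.finite_toSet.isClosed.isOpen_compl).mem_nhds hc
  refine ⟨hT, ?_, ?_⟩
  · classical
    -- regularised functions at the two poles
    let h1 : P3 → ℂ → Mat n := fun p τ => (1 - Prt p) * (ψ p τ * solginv a Pr p τ)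
    let h2 : P3 → ℂ → Mat n := fun p τ => (solg a Prt p τ * ψ p τ) * (1 - Pr p)
    let F1 : P3 → ℂ → Mat n := fun p τ =>
      ψ p τ * solginv a Pr p τ + (a - conj a) • dslope (h1 p) a τ
    let F2 : P3 → ℂ → Mat n := fun p τ =>
      solg a Prt p τ * ψ p τ + (conj a - a) • dslope (h2 p) (conj a) τ
    let Ψ : P3 → ℂ → Mat n := fun p τ => if τ = a then F1 p a else
      if τ = conj a then F2 p (conj a) else solg a Prt p τ * ψ p τ * solginv a Pr p τ
    have hΨ : ∀ (p : P3) (τ : ℂ), τ ∉ Sg → τ ≠ a → τ ≠ conj a →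
        Ψ p τ = solg a Prt p τ * ψ p τ * solginv a Pr p τ := by
      intro p τ _ h h'
      simp only [Ψ, if_neg h, if_neg h']
    have dg : ∀ p τ, τ ≠ a → DifferentiableAt ℂ (solg a Prt p) τ := fun p τ h =>
      bt_da_g _ _ _ h
    have dgi : ∀ p τ, τ ≠ conj a → DifferentiableAt ℂ (solginv a Pr p) τ := fun p τ h =>
      bt_da_g _ _ _ h
    have h10 : ∀ p, h1 p a = 0 := by
      intro p
      have e : solginv a Pr p a = Pr p := by
        have : (conj a - a) / (a - conj a) = -1 := by
          rw [div_eq_iff hd0]; ring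
        simp only [solginv, this, neg_smul, one_smul]; abel
      simp only [h1, e, sub_mul, one_mul, (hr p).1, sub_self]
    have h20 : ∀ p, h2 p (conj a) = 0 := by
      intro p
      have e : solg a Prt p (conj a) = Prt p := by
        have : (a - conj a) / (conj a - a) = -1 := by
          rw [div_eq_iff (sub_ne_zero.2 hne.symm)]; ring
        simp only [solg, this, neg_smul, one_smul]; abel
      have h := congrArg conjTranspose (hr p).2
      simp only [conjTranspose_mul, conjTranspose_conjTranspose, hherm, hPrtherm] at h
      simp only [h2, e, mul_sub, mul_one, h, sub_self]
    have dF1 : ∀ p, DifferentiableAt ℂ (F1 p) a := by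
      intro p
      refine (bt_da_mul (hψhol p a haSg) (dgi p a hne)).add
        (DifferentiableAt.fun_const_smul (bt_dslope ?_) _)
      filter_upwards [hnb a haSg, isOpen_ne.mem_nhds hne] with z hz hz'
      exact bt_da_mul (differentiableAt_const _) (bt_da_mul (hψhol p z hz) (dgi p z hz'))
    have dF2 : ∀ p, DifferentiableAt ℂ (F2 p) (conj a) := by
      intro p
      refine (bt_da_mul (dg p _ hne.symm) (hψhol p _ hacSg)).add
        (DifferentiableAt.fun_const_smul (bt_dslope ?_) _)
      filter_upwards [hnb _ hacSg, isOpen_ne.mem_nhds hne.symm] with z hz hz'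
      exact bt_da_mul (bt_da_mul (dg p z hz') (hψhol p z hz)) (differentiableAt_const _)
    have e1 : ∀ p, Ψ p =ᶠ[nhds a] F1 p := by
      intro p
      filter_upwards [isOpen_ne.mem_nhds hne] with z hz'
      by_cases hz : z = a
      · simp only [Ψ, hz, if_true]
      · simp only [Ψ, if_neg hz, if_neg (show z ≠ conj a from hz'), F1]
        rw [dslope_of_ne _ hz, slope_def_module, h10, sub_zero, smul_smul, ← div_eq_mul_inv]
        simp only [h1, solg, add_mul, one_mul, smul_mul_assoc, mul_assoc]
    have e2 : ∀ p, Ψ p =ᶠ[nhds (conj a)] F2 p := by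
      intro p
      filter_upwards [isOpen_ne.mem_nhds hne.symm] with z hz'
      by_cases hz : z = conj a
      · simp only [Ψ, hz, if_neg hne.symm, if_true]
      · simp only [Ψ, if_neg hz, if_neg (show z ≠ a from hz'), F2]
        rw [dslope_of_ne _ hz, slope_def_module, h20, sub_zero, smul_smul, ← div_eq_mul_inv]
        simp only [h2, solginv, mul_add, mul_one, mul_smul_comm]
    have dΨ1 : ∀ p, DifferentiableAt ℂ (Ψ p) a := fun p => (dF1 p).congr_of_eventuallyEq (e1 p)
    have dΨ2 : ∀ p, DifferentiableAt ℂ (Ψ p) (conj a) := fun p =>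
      (dF2 p).congr_of_eventuallyEq (e2 p)
    have hone : ∀ p, (Ψ p (conj a))ᴴ * Ψ p a = 1 := by
      intro p
      have c1 : ContinuousAt (Ψ p) a := (dΨ1 p).continuousAt
      have c2 : ContinuousAt (fun z => Ψ p (conj z)) a :=
        ContinuousAt.comp (f := fun z : ℂ => conj z) (dΨ2 p).continuousAt
          Complex.continuous_conj.continuousAt
      have c3 : ContinuousAt (fun z => (Ψ p (conj z))ᴴ * Ψ p z) a := by
        have c2' : ContinuousAt (fun z => (Ψ p (conj z))ᴴ) a :=
          ContinuousAt.comp (g := btStar n) (btStar n).continuous.continuousAt c2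
        exact c2'.mul c1
      have hev : (fun _ => (1 : Mat n)) =ᶠ[nhdsWithin a {a}ᶜ]
          fun z => (Ψ p (conj z))ᴴ * Ψ p z := by
        filter_upwards [mem_nhdsWithin_of_mem_nhds (hnb a haSg),
          mem_nhdsWithin_of_mem_nhds (isOpen_ne.mem_nhds hne), self_mem_nhdsWithin]
          with z hz hz' hz''
        have hz1 : z ≠ a := hz''
        have hz2 : z ≠ conj a := hz'
        have hz3 : conj z ≠ a := fun h => hz2 (by rw [← h, Complex.conj_conj])
        have hz4 : conj z ≠ conj a := fun h => hz1 ((starRingEnd ℂ).injective h)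
        have hz5 : conj z ∉ Sg := fun h => hz (by simpa using hSgc _ h)
        rw [hΨ p z hz hz1 hz2, hΨ p _ hz5 hz3 hz4]
        simp only [conjTranspose_mul, bt_g_star hPrtherm, bt_ginv_star hherm]
        calc (1 : Mat n) = solg a Pr p z * ((ψ p (conj z))ᴴ *
              (solginv a Prt p z * solg a Prt p z) * ψ p z) * solginv a Pr p z := by
              rw [bt_ginv_g hPrtidem p hz1 hz2, mul_one, hreal z hz, mul_one,
                bt_g_ginv hidem p hz1 hz2]
          _ = _ := by simp only [mul_assoc]
      have t1 : Filter.Tendsto (fun z => (Ψ p (conj z))ᴴ * Ψ p z) (nhdsWithin a {a}ᶜ)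
          (nhds ((Ψ p (conj a))ᴴ * Ψ p a)) := c3.tendsto.mono_left nhdsWithin_le_nhds
      exact tendsto_nhds_unique t1 (tendsto_const_nhds.congr' hev)
    refine ⟨Ψ, hΨ, fun p => ⟨dΨ1 p, dΨ2 p, ?_, ?_⟩⟩
    · exact IsUnit.of_mul_eq_one_right _ (hone p)
    · have h := congrArg conjTranspose (hone p)
      rw [conjTranspose_mul, conjTranspose_conjTranspose, conjTranspose_one] at h
      exact IsUnit.of_mul_eq_one_right _ h
  · intro τ hτ hτa hτb p
    have hg : ContDiff ℝ (⊤ : ℕ∞) (fun r => solg a Prt r τ) :=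
      contDiff_const.add ((contDiff_const.sub hT).const_smul ((a - conj a) / (τ - a)))
    have hgD : DifferentiableAt ℝ (fun r => solg a Prt r τ * ψ r τ) p :=
      (bt_cd_mul hg (hψC τ hτ)).differentiable (by simp) p
    refine ⟨?_, ?_, ?_⟩
    · rw [conjTranspose_mul, bt_g_star hPrtherm]
      calc _ = (ψ p (conj τ))ᴴ * (solginv a Prt p τ * solg a Prt p τ) * ψ p τ := by
            simp only [mul_assoc]
        _ = 1 := by rw [bt_ginv_g hPrtidem p hτa hτb, mul_one, hreal τ hτ]
    · have q0 := (heq τ hτ p).1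
      have q1 := (heq a haSg p).1
      have q2 := (heq _ hacSg p).1
      have q3 := (hsol p).1
      rw [bt_pdy (hψD _ hτ p), bt_pdxi (hψD _ hτ p)] at q0
      rw [bt_pdy (hψD _ haSg p), bt_pdxi (hψD _ haSg p)] at q1
      rw [bt_pdy (hψD _ hacSg p), bt_pdxi (hψD _ hacSg p)] at q2
      rw [bt_pdy (dP p), bt_pdxi (dP p)] at q3
      rw [bt_pdy hgD, bt_pdxi hgD, bt_pdy (dT p)]
      exact bt_frame hτa (hψD τ hτ) dT q0 (bt_key (hψD a haSg) (hψD _ hacSg) dP dT hBA q1 q2 q3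
        hPrtherm hPrtidem (fun r => (hr r).1) (fun r => (hr r).2))
    · have q0 := (heq τ hτ p).2
      have q1 := (heq a haSg p).2
      have q2 := (heq _ hacSg p).2
      have q3 := (hsol p).2
      rw [bt_pdy (hψD _ hτ p), bt_pdeta (hψD _ hτ p)] at q0
      rw [bt_pdy (hψD _ haSg p), bt_pdeta (hψD _ haSg p)] at q1
      rw [bt_pdy (hψD _ hacSg p), bt_pdeta (hψD _ hacSg p)] at q2
      rw [bt_pdy (dP p), bt_pdeta (dP p)] at q3
      rw [bt_pdy hgD, bt_pdeta hgD, bt_pdeta (dT p)]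
      exact bt_frame hτa (hψD τ hτ) dT q0 (bt_key (hψD a haSg) (hψD _ hacSg) dP dT hBA q1 q2 q3
        hPrtherm hPrtidem (fun r => (hr r).1) (fun r => (hr r).2))
end
end

section
/- (Algebraic Bäcklund transformation for monopoles.) Let (A,φ) be a connection and Higgs field on ℝ³, α ∈ ℂ∖ℝ, and let V ⊆ ℂ be an open neighborhood of α closed under conjugation. Let ψ : ℝ³ × V → GL(n,ℂ) be smooth, holomorphic in τ, satisfying for all τ ∈ V the monopole linear system (τ∂_y − ∂_ξ)ψ = (τ(A_y + φ) − A_ξ)ψ and (τ∂_η − ∂_y)ψ = (τA_η + φ − A_y)ψ, together with ψ(x,y,t,τ̄)*ψ(x,y,t,τ) = 1. Let π : ℝ³ → M_n(ℂ) be a smooth Hermitian-projection-valued map satisfying (α∂_yπ − ∂_ξπ)π = 0 and (α∂_ηπ − ∂_yπ)π = 0, and let π̃(x,y,t) be the Hermitian projection of ℂⁿ onto ψ(x,y,t,α)(range π(x,y,t)). Then: (1) ψ̃ := g_{α,π̃}·ψ·g_{α,π}⁻¹ extends holomorphically in τ to τ = α with invertible value there; (2) there exist smooth maps Ã_ξ,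 Ã_η, Ã_y, φ̃ : ℝ³ → M_n(ℂ) with Ã_η = A_η and Ã_y + φ̃ = A_y + φ such that ψ₁ := g_{α,π̃}·ψ satisfies (τ∂_y − ∂_ξ)ψ₁ = (τ(Ã_y + φ̃) − Ã_ξ)ψ₁ and (τ∂_η − ∂_y)ψ₁ = (τÃ_η + φ̃ − Ã_y)ψ₁ for all τ ∈ V∖{α,ᾱ}. -/
open Matrix Complex
open scoped Matrix ComplexConjugate

attribute [local instance] Matrix.normedAddCommGroup Matrix.normedSpace

noncomputable section

theorem aux_hasDerivAt_mul {n : ℕ} {𝕜 : Type*} [NontriviallyNormedField 𝕜] [NormedAlgebra 𝕜 ℂ]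
    {f g : 𝕜 → Mat n} {f' g' : Mat n} {x : 𝕜}
    (hf : HasDerivAt f f' x) (hg : HasDerivAt g g' x) :
    HasDerivAt (fun s => f s * g s) (f' * g x + f x * g') x := by
  refine hasDerivAt_pi.2 fun i => hasDerivAt_pi.2 fun j => ?_
  have h1 : ∀ i k, HasDerivAt (fun s => f s i k) (f' i k) x := fun i k =>
    hasDerivAt_pi.1 (hasDerivAt_pi.1 hf i) k
  have h2 : ∀ i k, HasDerivAt (fun s => g s i k) (g' i k) x := fun i k =>
    hasDerivAt_pi.1 (hasDerivAt_pi.1 hg i) k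
  have := HasDerivAt.fun_sum (u := Finset.univ) fun k _ => (h1 i k).fun_mul (h2 k j)
  have e : (f' * g x + f x * g') i j = ∑ k, (f' i k * g x k j + f x i k * g' k j) := by
    rw [Matrix.add_apply, Matrix.mul_apply, Matrix.mul_apply, Finset.sum_add_distrib]
  rw [e]
  exact this

theorem aux_hasDerivAt_conj {n : ℕ} {f : ℝ → Mat n} {f' : Mat n} {x : ℝ}
    (hf : HasDerivAt f f' x) : HasDerivAt (fun s => (f s)ᴴ) (f'ᴴ) x := by
  refine hasDerivAt_pi.2 fun i => hasDerivAt_pi.2 fun j => ?_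
  exact (hasDerivAt_pi.1 (hasDerivAt_pi.1 hf j) i).star

theorem aux_contDiff_mul {n : ℕ} {f g : P3 → Mat n} (hf : ContDiff ℝ (⊤ : ℕ∞) f)
    (hg : ContDiff ℝ (⊤ : ℕ∞) g) : ContDiff ℝ (⊤ : ℕ∞) (fun p => f p * g p) := by
  refine contDiff_pi.2 fun i => contDiff_pi.2 fun j => ?_
  have h1 : ∀ i k, ContDiff ℝ (⊤ : ℕ∞) (fun s => f s i k) := fun i k =>
    contDiff_pi.1 (contDiff_pi.1 hf i) k
  have h2 : ∀ i k, ContDiff ℝ (⊤ : ℕ∞) (fun s => g s i k) := fun i k =>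
    contDiff_pi.1 (contDiff_pi.1 hg i) k
  simp only [Matrix.mul_apply]
  exact ContDiff.sum fun k _ => (h1 i k).mul (h2 k j)

theorem aux_contDiff_conj {n : ℕ} {f : P3 → Mat n} (hf : ContDiff ℝ (⊤ : ℕ∞) f) :
    ContDiff ℝ (⊤ : ℕ∞) (fun p => (f p)ᴴ) := by
  refine contDiff_pi.2 fun i => contDiff_pi.2 fun j => ?_
  have h1 := contDiff_pi.1 (contDiff_pi.1 hf j) i
  exact (starL' ℝ (A := ℂ)).contDiff.comp h1

theorem aux_contDiff_det {n : ℕ} {f : P3 → Mat n} (hf : ContDiff ℝ (⊤ : ℕ∞) f) :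
    ContDiff ℝ (⊤ : ℕ∞) (fun p => (f p).det) := by
  have h1 : ∀ i k, ContDiff ℝ (⊤ : ℕ∞) (fun s => f s i k) := fun i k =>
    contDiff_pi.1 (contDiff_pi.1 hf i) k
  simp only [Matrix.det_apply']
  refine ContDiff.sum fun σ _ => contDiff_const.mul ?_
  exact contDiff_prod fun i _ => h1 _ _

theorem aux_contDiff_adj {n : ℕ} {f : P3 → Mat n} (hf : ContDiff ℝ (⊤ : ℕ∞) f) :
    ContDiff ℝ (⊤ : ℕ∞) (fun p => (f p).adjugate) := by
  refine contDiff_pi.2 fun i => contDiff_pi.2 fun j => ?_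
  simp only [Matrix.adjugate_apply]
  refine aux_contDiff_det ?_
  refine contDiff_pi.2 fun k => contDiff_pi.2 fun l => ?_
  simp only [Matrix.updateRow_apply]
  split_ifs
  · exact contDiff_const
  · exact contDiff_pi.1 (contDiff_pi.1 hf k) l

theorem aux_contDiff_inv {n : ℕ} {f : P3 → Mat n} (hf : ContDiff ℝ (⊤ : ℕ∞) f)
    (hu : ∀ p, IsUnit (f p)) :
    ContDiff ℝ (⊤ : ℕ∞) (fun p => (f p)⁻¹) := by
  have hd : ∀ p, (f p).det ≠ 0 := fun p => ((Matrix.isUnit_iff_isUnit_det _).1 (hu p)).ne_zero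
  simp only [Matrix.inv_def, Ring.inverse_eq_inv']
  refine contDiff_pi.2 fun i => contDiff_pi.2 fun j => ?_
  simp only [Matrix.smul_apply, smul_eq_mul]
  exact ((aux_contDiff_det hf).inv hd).mul
    (contDiff_pi.1 (contDiff_pi.1 (aux_contDiff_adj hf) i) j)

section

variable {n : ℕ}

/-- directional derivative -/
def auxD (f : P3 → Mat n) (p v : P3) : Mat n := fderiv ℝ f p v

theorem aux_pdx {f : P3 → Mat n} (hf : Differentiable ℝ f) (p : P3) :
    pdx f p = auxD f p (1, 0, 0) := by
  have hc : HasDerivAt (fun s : ℝ => ((s, p.2.1, p.2.2) : P3)) (1, 0, 0) p.1 :=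
    (hasDerivAt_id _).prodMk (hasDerivAt_const _ _)
  exact ((hf p).hasFDerivAt.comp_hasDerivAt p.1 hc).deriv

theorem aux_pdy {f : P3 → Mat n} (hf : Differentiable ℝ f) (p : P3) :
    pdy f p = auxD f p (0, 1, 0) := by
  have hc : HasDerivAt (fun s : ℝ => ((p.1, s, p.2.2) : P3)) (0, 1, 0) p.2.1 :=
    (hasDerivAt_const _ _).prodMk ((hasDerivAt_id _).prodMk (hasDerivAt_const _ _))
  exact ((hf p).hasFDerivAt.comp_hasDerivAt p.2.1 hc).deriv

theorem aux_pdt {f : P3 → Mat n} (hf : Differentiable ℝ f) (p : P3) :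
    pdt f p = auxD f p (0, 0, 1) := by
  have hc : HasDerivAt (fun s : ℝ => ((p.1, p.2.1, s) : P3)) (0, 0, 1) p.2.2 :=
    (hasDerivAt_const _ _).prodMk ((hasDerivAt_const _ _).prodMk (hasDerivAt_id _))
  exact ((hf p).hasFDerivAt.comp_hasDerivAt p.2.2 hc).deriv

theorem aux_pdxi {f : P3 → Mat n} (hf : Differentiable ℝ f) (p : P3) :
    pdxi f p = auxD f p (1, 0, 1) := by
  rw [pdxi, aux_pdt hf, aux_pdx hf]
  have h := (fderiv ℝ f p).map_add (0, 0, 1) (1, 0, 0)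
  have e : ((0, 0, 1) : P3) + (1, 0, 0) = (1, 0, 1) := by simp
  rw [e] at h
  exact h.symm

theorem aux_pdeta {f : P3 → Mat n} (hf : Differentiable ℝ f) (p : P3) :
    pdeta f p = auxD f p (-1, 0, 1) := by
  rw [pdeta, aux_pdt hf, aux_pdx hf]
  have h := (fderiv ℝ f p).map_sub (0, 0, 1) (1, 0, 0)
  have e : ((0, 0, 1) : P3) - (1, 0, 0) = (-1, 0, 1) := by simp
  rw [e] at h
  exact h.symm

theorem aux_line {f : P3 → Mat n} (hf : Differentiable ℝ f) (p v : P3) :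
    HasDerivAt (fun s : ℝ => f (p + s • v)) (auxD f p v) 0 :=
  (hf p).hasFDerivAt.hasLineDerivAt v

end

theorem aux_fderiv_mul {n : ℕ} {f g : P3 → Mat n} (hf : Differentiable ℝ f)
    (hg : Differentiable ℝ g) (hfg : Differentiable ℝ (fun p => f p * g p)) (p v : P3) :
    auxD (fun p => f p * g p) p v = auxD f p v * g p + f p * auxD g p v := by
  have := (aux_line hfg p v).unique (aux_hasDerivAt_mul (aux_line hf p v) (aux_line hg p v))
  simpa using this

theorem aux_fderiv_herm {n : ℕ} {f : P3 → Mat n} (hf : Differentiable ℝ f)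
    (h : ∀ p, (f p)ᴴ = f p) (p v : P3) :
    (auxD f p v)ᴴ = auxD f p v := by
  have h1 := aux_hasDerivAt_conj (aux_line hf p v)
  simp only [h] at h1
  exact h1.unique (aux_line hf p v)

/-- pointwise algebra -/
theorem aux_key {n : ℕ} (a : ℂ) (T T1 T2 B C : Mat n) (hT : T * T = T) (hTh : Tᴴ = T)
    (hB : Bᴴ = -B) (hC : Cᴴ = -C) (h1 : T1ᴴ = T1) (h2 : T2ᴴ = T2)
    (d1 : T1 = T1 * T + T * T1) (d2 : T2 = T2 * T + T * T2)
    (h : (a • T1 - T2 - ((a • B - C) * T - T * (a • B - C))) * T = 0) (k τ : ℂ)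
    (hk : a - conj a = k * (τ - a)) :
    -(k • (τ • T1 - T2)) + (1 + k • (1 - T)) * (τ • B - C) =
      (τ • B - (C + (a - conj a) • (T1 - (B * T - T * B)))) * (1 + k • (1 - T)) := by
  obtain ⟨D1, hD1⟩ : ∃ D, D = T1 - (B * T - T * B) := ⟨_, rfl⟩
  obtain ⟨D2, hD2⟩ : ∃ D, D = T2 - (C * T - T * C) := ⟨_, rfl⟩
  have e1 : D1ᴴ = D1 := by
    rw [hD1]; simp [hTh, hB, h1]; abel
  have e2 : D2ᴴ = D2 := by
    rw [hD2]; simp [hTh, hC, h2]; abel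
  have f1 : D1 = D1 * T + T * D1 := by
    have : D1 * T + T * D1 - D1 = (T1 * T + T * T1 - T1) - B * (T * T - T) + (T * T - T) * B := by
      rw [hD1]; noncomm_ring
    rw [hT, ← d1] at this
    simp at this
    exact (sub_eq_zero.1 this).symm
  have f2 : D2 = D2 * T + T * D2 := by
    have : D2 * T + T * D2 - D2 = (T2 * T + T * T2 - T2) - C * (T * T - T) + (T * T - T) * C := by
      rw [hD2]; noncomm_ring
    rw [hT, ← d2] at this
    simp at this
    exact (sub_eq_zero.1 this).symm
  have g : (a • D1 - D2) * T = 0 := by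
    rw [← h, hD1, hD2]
    congr 1
    simp only [sub_mul, mul_sub, smul_mul_assoc, mul_smul_comm]
    module
  have g' : T * (conj a • D1 - D2) = 0 := by
    have := congrArg conjTranspose g
    simpa [hTh, e1, e2] using this
  have F : a • D1 - D2 = (a - conj a) • (D1 * (1 - T)) := by
    have u1 : D1 * (1 - T) = T * D1 := by
      rw [mul_sub, mul_one]; nth_rewrite 1 [f1]; abel
    have u2 : a • D1 - D2 = (a • D1 - D2) * T + T * (a • D1 - D2) := by
      nth_rewrite 1 [f1, f2]
      simp only [sub_mul, mul_sub, smul_mul_assoc, mul_smul_comm]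
      module
    rw [u1, u2, g, zero_add, ← sub_zero (T * (a • D1 - D2)), ← g']
    simp only [sub_mul, mul_sub, smul_mul_assoc, mul_smul_comm]
    module
  have t1 : T1 = D1 + (B * T - T * B) := by rw [hD1]; abel
  have t2 : T2 = a • D1 - (a - conj a) • (D1 * (1 - T)) + (C * T - T * C) := by
    rw [← F, hD2]; abel
  rw [← hD1, t1, t2, hk]
  simp only [sub_mul, mul_sub, add_mul, mul_add, smul_mul_assoc, mul_smul_comm, mul_one, one_mul]
  module

theorem aux_range {n : ℕ} {S P T : Mat n} (hT : T * T = T)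
    (hr : LinearMap.range (Matrix.mulVecLin T) =
      Submodule.map (Matrix.mulVecLin S) (LinearMap.range (Matrix.mulVecLin P))) :
    T * (S * P) = S * P ∧ ∀ M : Mat n, M * (S * P) = 0 → M * T = 0 := by
  constructor
  · apply Matrix.mulVec_injective
    funext v
    have : S *ᵥ (P *ᵥ v) ∈ LinearMap.range (Matrix.mulVecLin T) := by
      rw [hr]; exact ⟨_, ⟨v, rfl⟩, rfl⟩
    obtain ⟨w, hw⟩ := this
    simp only [Matrix.mulVecLin_apply] at hw
    rw [← Matrix.mulVec_mulVec, ← Matrix.mulVec_mulVec, ← hw, Matrix.mulVec_mulVec, hT]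
  · intro M hM
    apply Matrix.mulVec_injective
    funext v
    have : T *ᵥ v ∈ Submodule.map (Matrix.mulVecLin S) (LinearMap.range (Matrix.mulVecLin P)) := by
      rw [← hr]; exact ⟨v, rfl⟩
    obtain ⟨_, ⟨w, rfl⟩, hw⟩ := this
    simp only [Matrix.mulVecLin_apply] at hw
    rw [← Matrix.mulVec_mulVec, ← hw, Matrix.mulVec_mulVec, Matrix.mulVec_mulVec, mul_assoc, hM]
    simp

theorem aux_smooth {n : ℕ} {S P T : P3 → Mat n} (hS : ContDiff ℝ (⊤ : ℕ∞) S)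
    (hP : ContDiff ℝ (⊤ : ℕ∞) P) (hSu : ∀ p, IsUnit (S p))
    (hPh : ∀ p, (P p)ᴴ = P p) (hPi : ∀ p, P p * P p = P p)
    (hTh : ∀ p, (T p)ᴴ = T p)
    (hT1 : ∀ p, T p * (S p * P p) = S p * P p)
    (hT2 : ∀ p, ∀ M : Mat n, M * (S p * P p) = 0 → M * T p = 0) :
    ContDiff ℝ (⊤ : ℕ∞) T := by
  set K : P3 → Mat n := fun p => S p * P p with hK
  set G : P3 → Mat n := fun p => (K p)ᴴ * K p + (1 - P p) with hG
  have hKs : ContDiff ℝ (⊤ : ℕ∞) K := aux_contDiff_mul hS hP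
  have hGs : ContDiff ℝ (⊤ : ℕ∞) G :=
    (aux_contDiff_mul (aux_contDiff_conj hKs) hKs).add (contDiff_const.sub hP)
  have hKP : ∀ p, K p * P p = K p := fun p => by simp only [hK, mul_assoc, hPi]
  have hPK : ∀ p, P p * (K p)ᴴ = (K p)ᴴ := fun p => by
    have := congrArg conjTranspose (hKP p)
    simpa [hPh] using this
  have hGP : ∀ p, G p * P p = (K p)ᴴ * K p := fun p => by
    simp only [hG, add_mul, sub_mul, one_mul, mul_assoc, hKP, hPi, sub_self, add_zero]
  have hPG : ∀ p, P p * G p = (K p)ᴴ * K p := fun p => by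
    simp only [hG, mul_add, mul_sub, mul_one, ← mul_assoc, hPK, hPi, sub_self, add_zero]
  have hGu : ∀ p, IsUnit (G p) := fun p => by
    rw [← Matrix.mulVec_injective_iff_isUnit]
    rw [← Matrix.coe_mulVecLin, ← LinearMap.ker_eq_bot, LinearMap.ker_eq_bot']
    intro v hv
    rw [Matrix.mulVecLin_apply] at hv
    have h1 : ((K p)ᴴ * K p) *ᵥ v = 0 := by
      rw [← hPG, ← Matrix.mulVec_mulVec, hv, Matrix.mulVec_zero]
    have h2 : (1 - P p) *ᵥ v = 0 := by
      have : (G p) *ᵥ v = ((K p)ᴴ * K p) *ᵥ v + (1 - P p) *ᵥ v := by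
        simp only [hG, Matrix.add_mulVec]
      rw [hv, h1, zero_add] at this
      exact this.symm
    have h3 : K p *ᵥ v = 0 := by
      open scoped ComplexOrder in
      exact (Matrix.conjTranspose_mul_self_mulVec_eq_zero _ _).1 h1
    have h4 : P p *ᵥ v = 0 := by
      apply Matrix.mulVec_injective_iff_isUnit.2 (hSu p)
      simp only [Matrix.mulVec_mulVec, Matrix.mulVec_zero]
      exact h3
    rw [Matrix.sub_mulVec, h4, Matrix.one_mulVec, sub_zero] at h2
    exact h2
  set R : P3 → Mat n := fun p => K p * (G p)⁻¹ * (K p)ᴴ with hR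
  have hRs : ContDiff ℝ (⊤ : ℕ∞) R :=
    aux_contDiff_mul (aux_contDiff_mul hKs (aux_contDiff_inv hGs hGu)) (aux_contDiff_conj hKs)
  suffices T = R by rw [this]; exact hRs
  funext p
  have hdet := (Matrix.isUnit_iff_isUnit_det _).1 (hGu p)
  have hGh : (G p)ᴴ = G p := by simp [hG, hPh]
  have hRh : (R p)ᴴ = R p := by
    simp only [hR, Matrix.conjTranspose_mul, Matrix.conjTranspose_conjTranspose,
      Matrix.conjTranspose_nonsing_inv, hGh, mul_assoc]
  have hRK : R p * K p = K p := by
    simp only [hR]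
    rw [mul_assoc, ← hGP, mul_assoc, ← mul_assoc (G p)⁻¹, Matrix.nonsing_inv_mul _ hdet, one_mul,
      hKP]
  have hTR : T p * R p = R p := by
    simp only [hR, ← mul_assoc]
    rw [hT1 p]
  have hRT : R p * T p = T p := by
    have := hT2 p (R p - 1) (by rw [sub_mul, one_mul]; exact sub_eq_zero.2 hRK)
    rw [sub_mul, one_mul] at this
    exact sub_eq_zero.1 this
  have := congrArg conjTranspose hRT
  rw [Matrix.conjTranspose_mul, hTh, hRh, hTR] at this
  exact this.symm

/-- generic first-order equation -/
theorem aux_eqn {n : ℕ} (a : ℂ) {S P T B C : P3 → Mat n} (hS : ContDiff ℝ (⊤ : ℕ∞) S)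
    (hP : ContDiff ℝ (⊤ : ℕ∞) P) (hTs : ContDiff ℝ (⊤ : ℕ∞) T)
    (hPi : ∀ p, P p * P p = P p)
    (hTh : ∀ p, (T p)ᴴ = T p) (hTi : ∀ p, T p * T p = T p)
    (hT1 : ∀ p, T p * (S p * P p) = S p * P p)
    (hT2 : ∀ p, ∀ M : Mat n, M * (S p * P p) = 0 → M * T p = 0)
    (hB : ∀ p, (B p)ᴴ = -B p) (hC : ∀ p, (C p)ᴴ = -C p) (v w : P3)
    (hSe : ∀ p, a • auxD S p v - auxD S p w = (a • B p - C p) * S p)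
    (hPe : ∀ p, (a • auxD P p v - auxD P p w) * P p = 0)
    (τ : ℂ) (hτ : τ ≠ a) {Y : P3 → Mat n} (hY : ContDiff ℝ (⊤ : ℕ∞) Y)
    (hYe : ∀ p, τ • auxD Y p v - auxD Y p w = (τ • B p - C p) * Y p) (p : P3) :
    τ • auxD (fun r => solg a T r τ * Y r) p v - auxD (fun r => solg a T r τ * Y r) p w =
      (τ • B p - (C p + (a - conj a) • (auxD T p v - (B p * T p - T p * B p)))) *
        (solg a T p τ * Y p) := by
  have dd : ∀ {f : P3 → Mat n}, ContDiff ℝ (⊤ : ℕ∞) f → Differentiable ℝ f :=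
    fun h => h.differentiable (by simp)
  have hK := aux_contDiff_mul hS hP
  have hder : ∀ u, auxD T p u = auxD T p u * T p + T p * auxD T p u := fun u => by
    have := aux_fderiv_mul (dd hTs) (dd hTs) (dd (aux_contDiff_mul hTs hTs)) p u
    simpa only [hTi] using this
  have hTK : ∀ u, auxD T p u * (S p * P p) +
      T p * (auxD S p u * P p + S p * auxD P p u) =
      auxD S p u * P p + S p * auxD P p u := fun u => by
    have h := aux_fderiv_mul (dd hTs) (dd hK) (dd (aux_contDiff_mul hTs hK)) p u
    simp only [hT1] at h
    rw [aux_fderiv_mul (dd hS) (dd hP) (dd hK) p u] at h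
    exact h.symm
  have hmain : (a • auxD T p v - auxD T p w -
      ((a • B p - C p) * T p - T p * (a • B p - C p))) * T p = 0 := by
    apply hT2
    have hv := hTK v
    have hw := hTK w
    have hs := hSe p
    have hp := hPe p
    have h1 := hT1 p
    have hpi := hPi p
    generalize auxD T p v = Tv at *
    generalize auxD T p w = Tw at *
    generalize auxD S p v = Sv at *
    generalize auxD S p w = Sw at *
    generalize auxD P p v = Pv at *
    generalize auxD P p w = Pw at *
    generalize a • B p - C p = U at *
    generalize T p = T at *
    generalize S p = S at *
    generalize P p = P at *
    have e1 : (a • Tv - Tw) * (S * P) + T * (((a • Sv - Sw) * P) + S * (a • Pv - Pw)) =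
        ((a • Sv - Sw) * P) + S * (a • Pv - Pw) := by
      have := congrArg₂ (fun x y => a • x - y) hv hw
      simp only [sub_mul, mul_sub, add_mul, mul_add, smul_mul_assoc, mul_smul_comm] at this ⊢
      rw [← sub_eq_zero] at this ⊢
      rw [← this]
      module
    rw [hs] at e1
    generalize a • Tv - Tw = X at *
    generalize a • Pv - Pw = Z at *
    have e2 := congrArg (fun x => x * P) e1
    simp only [add_mul, mul_add, mul_assoc, hpi, hp, mul_zero, add_zero] at e2
    have e3 : (X - (U * T - T * U)) * (S * P) =
        X * (S * P) + T * (U * (S * P)) - U * (T * (S * P)) := by noncomm_ring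
    rw [e3, h1, e2, sub_self]

  have hsg : (fun r => solg a T r τ) = fun r => (1 + ((a - conj a) / (τ - a)) • (1 - T r) : Mat n) :=
    rfl
  have hgs : ContDiff ℝ (⊤ : ℕ∞) (fun r => solg a T r τ) := by
    rw [hsg]
    exact contDiff_const.add ((contDiff_const.sub hTs).const_smul _)
  have hgd : ∀ u, auxD (fun r => solg a T r τ) p u =
      -(((a - conj a) / (τ - a)) • auxD T p u) := fun u => by
    have h2 : HasDerivAt (fun s : ℝ => solg a T (p + s • u) τ)
      (((a - conj a) / (τ - a)) • (-auxD T p u)) 0 :=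
      (((aux_line (dd hTs) p u).const_sub 1).const_smul ((a - conj a) / (τ - a))).const_add 1
    rw [(aux_line (dd hgs) p u).unique h2, smul_neg]
  have hk : a - conj a = ((a - conj a) / (τ - a)) * (τ - a) :=
    (div_mul_cancel₀ _ (sub_ne_zero.2 hτ)).symm
  have key := aux_key a (T p) (auxD T p v) (auxD T p w) (B p) (C p) (hTi p) (hTh p) (hB p)
    (hC p) (aux_fderiv_herm (dd hTs) hTh p v) (aux_fderiv_herm (dd hTs) hTh p w) (hder v) (hder w)
    hmain _ τ hk
  have hsp : solg a T p τ = 1 + ((a - conj a) / (τ - a)) • (1 - T p) := rfl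
  rw [aux_fderiv_mul (dd hgs) (dd hY) (dd (aux_contDiff_mul hgs hY)) p v,
    aux_fderiv_mul (dd hgs) (dd hY) (dd (aux_contDiff_mul hgs hY)) p w, hgd, hgd, ← mul_assoc]
  rw [hsp, ← key]
  generalize (1 : Mat n) + ((a - conj a) / (τ - a)) • (1 - T p) = g
  rw [add_mul, mul_assoc g, ← hYe p]
  simp only [sub_mul, mul_sub, neg_mul, smul_mul_assoc, mul_smul_comm]
  module

theorem aux_part1 {n : ℕ} (a : ℂ) (ha : a.im ≠ 0) (V : Set ℂ) (hVo : IsOpen V) (haV : a ∈ V)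
    (f : ℂ → Mat n) (hf : ∀ τ ∈ V, DifferentiableAt ℂ f τ) (hu : IsUnit (f a))
    (P T : Mat n) (hPi : P * P = P) (hTi : T * T = T)
    (hT1 : T * (f a * P) = f a * P) (hr : LinearMap.range (Matrix.mulVecLin T) =
      Submodule.map (Matrix.mulVecLin (f a)) (LinearMap.range (Matrix.mulVecLin P))) :
    ∃ F : ℂ → Mat n, (∀ τ, τ ≠ a → F τ = (1 + ((a - conj a) / (τ - a)) • (1 - T)) * f τ *
      (1 + ((conj a - a) / (τ - conj a)) • (1 - P))) ∧ DifferentiableAt ℂ F a ∧ IsUnit (F a) := by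
  have hca : a - conj a ≠ 0 := by
    intro h
    apply ha
    have := congrArg Complex.im h
    simp at this
    linarith
  set h : ℂ → Mat n := fun τ => 1 + ((conj a - a) / (τ - conj a)) • (1 - P) with hh
  have hha : h a = P := by
    have : (conj a - a) / (a - conj a) = -1 := by
      rw [← neg_sub a, neg_div, div_self hca]
    simp [hh, this]
  have hhd : ∀ τ, τ ≠ conj a → HasDerivAt h
      ((-(conj a - a) / (τ - conj a) ^ 2) • (1 - P)) τ := fun τ hτ => by
    have h1 : HasDerivAt (fun τ : ℂ => (conj a - a) / (τ - conj a))
        (-(conj a - a) / (τ - conj a) ^ 2) τ := by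
      have := (hasDerivAt_const τ (conj a - a)).div ((hasDerivAt_id τ).sub_const (conj a))
        (sub_ne_zero.2 hτ)
      simp only [zero_mul, zero_sub, mul_one] at this
      exact this
    exact (h1.smul_const (1 - P)).const_add 1
  have hane : a ≠ conj a := sub_ne_zero.1 hca
  set q : ℂ → Mat n := fun τ => f τ * h τ with hq
  set F : ℂ → Mat n := fun τ => (1 - T) * (f τ * h τ) with hF
  have hqd : ∀ τ ∈ V, τ ≠ conj a → HasDerivAt q (deriv f τ * h τ + f τ *
      ((-(conj a - a) / (τ - conj a) ^ 2) • (1 - P))) τ := fun τ hτ hτ' =>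
    aux_hasDerivAt_mul (hf τ hτ).hasDerivAt (hhd τ hτ')
  have hFd : ∀ τ ∈ V, τ ≠ conj a → HasDerivAt F ((1 - T) * (deriv f τ * h τ + f τ *
      ((-(conj a - a) / (τ - conj a) ^ 2) • (1 - P)))) τ := fun τ hτ hτ' => by
    have := aux_hasDerivAt_mul (hasDerivAt_const τ (1 - T)) (hqd τ hτ hτ')
    simpa using this
  have hF0 : F a = 0 := by
    simp only [hF, hha, sub_mul, one_mul, hT1, sub_self]
  refine ⟨fun τ => q τ + (a - conj a) • dslope F a τ, ?_, ?_, ?_⟩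
  · intro τ hτ
    simp only
    rw [dslope_of_ne _ hτ, slope_def_module, hF0, sub_zero]
    simp only [hF, hq, hh, add_mul, one_mul, smul_mul_assoc, mul_assoc, smul_smul, div_eq_mul_inv]
  · refine (hqd a haV hane).differentiableAt.fun_add (DifferentiableAt.fun_const_smul ?_ _)
    have hs : V ∩ {conj a}ᶜ ∈ nhds a :=
      (hVo.inter isOpen_compl_singleton).mem_nhds ⟨haV, hane⟩
    have := (Complex.differentiableOn_dslope (f := F) hs).2 fun τ hτ =>
      (hFd τ hτ.1 hτ.2).differentiableAt.differentiableWithinAt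
    exact this.differentiableAt hs
  · simp only [dslope_same, (hFd a haV hane).deriv, hq, hha]
    rw [← Matrix.mulVec_injective_iff_isUnit]
    rw [← Matrix.coe_mulVecLin, ← LinearMap.ker_eq_bot, LinearMap.ker_eq_bot']
    intro v hv
    rw [Matrix.mulVecLin_apply] at hv
    have hinj := Matrix.mulVec_injective_iff_isUnit.2 hu
    have hTT : T * (1 - T) = 0 := by rw [mul_sub, mul_one, hTi, sub_self]
    have hPv : P *ᵥ v = 0 := by
      have := congrArg (fun x => T *ᵥ x) hv
      simp only [Matrix.mulVec_mulVec, mul_add, mul_smul_comm, ← mul_assoc T (1 - T), hTT,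
        zero_mul, smul_zero, add_zero, Matrix.mulVec_zero] at this
      rw [hT1] at this
      apply hinj
      simpa only [Matrix.mulVec_mulVec, Matrix.mulVec_zero] using this
    have hv2 : (1 - T) *ᵥ (f a *ᵥ v) = 0 := by
      have hc : (a - conj a) * (-(conj a - a) / (a - conj a) ^ 2) = 1 := by
        field_simp
        ring
      have h0 : ∀ M : Mat n, (M * P) *ᵥ v = 0 := fun M => by
        rw [← Matrix.mulVec_mulVec, hPv, Matrix.mulVec_zero]
      simp only [mul_add, mul_smul_comm, smul_add, smul_smul, hc, one_smul, mul_sub, mul_one,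
        Matrix.add_mulVec, Matrix.sub_mulVec, Matrix.smul_mulVec, ← mul_assoc, h0] at hv
      simpa [Matrix.sub_mulVec, Matrix.mulVec_mulVec, mul_assoc, sub_mul] using hv
    have hm : f a *ᵥ v ∈ LinearMap.range (Matrix.mulVecLin T) := by
      refine ⟨f a *ᵥ v, ?_⟩
      rw [Matrix.sub_mulVec, Matrix.one_mulVec] at hv2
      exact (sub_eq_zero.1 hv2).symm
    rw [hr] at hm
    obtain ⟨_, ⟨w, rfl⟩, hw⟩ := hm
    have hw' : P *ᵥ w = v := hinj hw
    rw [← hw', ← hPv, ← hw', Matrix.mulVec_mulVec, hPi]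

/-- **Algebraic Bäcklund transformation for monopoles.**
Given a frame `ψ` of a monopole `(A,φ)` on a conjugation-closed neighborhood `V` of `α`,
a 1-soliton projection `π`, and `π̃` the Hermitian projection onto `ψ(·,α)(range π)`:
(1) `ψ̃ = g_{α,π̃}·ψ·g_{α,π}⁻¹` extends holomorphically and invertibly to `τ = α`;
(2) `ψ₁ = g_{α,π̃}·ψ` is a frame for new fields `(Ã, φ̃)` with `Ã_η = A_η` and
`Ã_y + φ̃ = A_y + φ`. -/
theorem algebraic_backlund_monopole {n : ℕ} (Ax Ay At Ph : P3 → Mat n)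
    (hxs : ContDiff ℝ (⊤ : ℕ∞) Ax) (hys : ContDiff ℝ (⊤ : ℕ∞) Ay)
    (hts : ContDiff ℝ (⊤ : ℕ∞) At) (hps : ContDiff ℝ (⊤ : ℕ∞) Ph)
    (hxa : SkewHerm Ax) (hya : SkewHerm Ay) (hta : SkewHerm At) (hpa : SkewHerm Ph)
    (a : ℂ) (ha : a.im ≠ 0)
    (V : Set ℂ) (hVo : IsOpen V) (haV : a ∈ V) (hVc : ∀ τ ∈ V, conj τ ∈ V)
    (ψ : P3 → ℂ → Mat n)
    (hψs : ContDiffOn ℝ (⊤ : ℕ∞) (fun q : P3 × ℂ => ψ q.1 q.2) {q : P3 × ℂ | q.2 ∈ V})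
    (hψhol : ∀ (p : P3) (τ : ℂ), τ ∈ V → DifferentiableAt ℂ (ψ p) τ)
    (hψgl : ∀ (p : P3) (τ : ℂ), τ ∈ V → IsUnit (ψ p τ))
    (heq : ∀ τ ∈ V, ∀ p : P3,
      τ • pdy (fun r => ψ r τ) p - pdxi (fun r => ψ r τ) p =
        (τ • (Ay p + Ph p) - (At p + Ax p)) * ψ p τ ∧
      τ • pdeta (fun r => ψ r τ) p - pdy (fun r => ψ r τ) p =
        (τ • (At p - Ax p) + Ph p - Ay p) * ψ p τ)
    (hreal : ∀ τ ∈ V, ∀ p : P3, (ψ p (conj τ))ᴴ * ψ p τ = 1)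
    (Pr : P3 → Mat n) (hPrs : ContDiff ℝ (⊤ : ℕ∞) Pr)
    (hherm : ∀ p : P3, (Pr p)ᴴ = Pr p) (hidem : ∀ p : P3, Pr p * Pr p = Pr p)
    (hsol : ∀ p : P3, (a • pdy Pr p - pdxi Pr p) * Pr p = 0 ∧
      (a • pdeta Pr p - pdy Pr p) * Pr p = 0)
    (Prt : P3 → Mat n)
    (hPrtherm : ∀ p : P3, (Prt p)ᴴ = Prt p) (hPrtidem : ∀ p : P3, Prt p * Prt p = Prt p)
    (hPrtrange : ∀ p : P3, LinearMap.range (Matrix.mulVecLin (Prt p)) =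
      Submodule.map (Matrix.mulVecLin (ψ p a)) (LinearMap.range (Matrix.mulVecLin (Pr p)))) :
    (∃ Ψ : P3 → ℂ → Mat n,
      (∀ (p : P3) (τ : ℂ), τ ∈ V → τ ≠ a → τ ≠ conj a →
        Ψ p τ = solg a Prt p τ * ψ p τ * solginv a Pr p τ) ∧
      (∀ p : P3, DifferentiableAt ℂ (Ψ p) a ∧ IsUnit (Ψ p a))) ∧
    (∃ Axi Aeta Ay' Ph' : P3 → Mat n,
      ContDiff ℝ (⊤ : ℕ∞) Axi ∧ ContDiff ℝ (⊤ : ℕ∞) Aeta ∧ ContDiff ℝ (⊤ : ℕ∞) Ay' ∧ ContDiff ℝ (⊤ : ℕ∞) Ph' ∧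
      (∀ p : P3, Aeta p = At p - Ax p) ∧
      (∀ p : P3, Ay' p + Ph' p = Ay p + Ph p) ∧
      (∀ τ : ℂ, τ ∈ V → τ ≠ a → τ ≠ conj a → ∀ p : P3,
        τ • pdy (fun r => solg a Prt r τ * ψ r τ) p -
            pdxi (fun r => solg a Prt r τ * ψ r τ) p =
          (τ • (Ay' p + Ph' p) - Axi p) * (solg a Prt p τ * ψ p τ) ∧
        τ • pdeta (fun r => solg a Prt r τ * ψ r τ) p -
            pdy (fun r => solg a Prt r τ * ψ r τ) p =
          (τ • Aeta p + Ph' p - Ay' p) * (solg a Prt p τ * ψ p τ))) := by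
  have hR : ∀ p, _ := fun p => aux_range (hPrtidem p) (hPrtrange p)
  have hsl : ∀ τ ∈ V, ContDiff ℝ (⊤ : ℕ∞) (fun p => ψ p τ) := fun τ hτ => by
    rw [← contDiffOn_univ]
    exact hψs.comp (contDiff_id.prodMk contDiff_const).contDiffOn fun p _ => hτ
  have hTs : ContDiff ℝ (⊤ : ℕ∞) Prt := aux_smooth (hsl a haV) hPrs (fun p => hψgl p a haV)
    hherm hidem hPrtherm (fun p => (hR p).1) (fun p => (hR p).2)
  have dd : ∀ {f : P3 → Mat n}, ContDiff ℝ (⊤ : ℕ∞) f → Differentiable ℝ f :=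
    fun h => h.differentiable (by simp)
  have hgs : ∀ τ ∈ V, ContDiff ℝ (⊤ : ℕ∞) (fun r => solg a Prt r τ * ψ r τ) := fun τ hτ => by
    refine aux_contDiff_mul ?_ (hsl τ hτ)
    have hsg : (fun r => solg a Prt r τ) =
      fun r => (1 + ((a - conj a) / (τ - a)) • (1 - Prt r) : Mat n) := rfl
    rw [hsg]
    exact contDiff_const.add ((contDiff_const.sub hTs).const_smul _)
  refine ⟨?_, ?_⟩
  · choose F hF1 hF2 using fun p => aux_part1 a ha V hVo haV (ψ p) (hψhol p) (hψgl p a haV)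
      (Pr p) (Prt p) (hidem p) (hPrtidem p) (hR p).1 (hPrtrange p)
    exact ⟨F, fun p τ _ h _ => hF1 p τ h, hF2⟩
  · have hfd : ∀ u, ContDiff ℝ (⊤ : ℕ∞) (fun p => auxD Prt p u) := fun u =>
      ContDiff.clm_apply (f := fun p => fderiv ℝ Prt p) (hTs.fderiv_right (m := (⊤ : ℕ∞)) le_rfl) contDiff_const
    obtain ⟨C1, hC1⟩ : ∃ C1 : P3 → Mat n, C1 = fun p => (At p + Ax p) + (a - conj a) •
      (auxD Prt p (0, 1, 0) - ((Ay p + Ph p) * Prt p - Prt p * (Ay p + Ph p))) := ⟨_, rfl⟩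
    obtain ⟨C2, hC2⟩ : ∃ C2 : P3 → Mat n, C2 = fun p => (Ay p - Ph p) + (a - conj a) •
      (auxD Prt p (-1, 0, 1) - ((At p - Ax p) * Prt p - Prt p * (At p - Ax p))) := ⟨_, rfl⟩
    have hC1s : ContDiff ℝ (⊤ : ℕ∞) C1 := by
      rw [hC1]
      exact (hts.add hxs).add (((hfd _).sub ((aux_contDiff_mul (hys.add hps) hTs).sub
        (aux_contDiff_mul hTs (hys.add hps)))).const_smul _)
    have hC2s : ContDiff ℝ (⊤ : ℕ∞) C2 := by
      rw [hC2]
      exact (hys.sub hps).add (((hfd _).sub ((aux_contDiff_mul (hts.sub hxs) hTs).sub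
        (aux_contDiff_mul hTs (hts.sub hxs)))).const_smul _)
    have hE1 : ∀ τ ∈ V, ∀ p, τ • auxD (fun r => ψ r τ) p (0, 1, 0) -
        auxD (fun r => ψ r τ) p (1, 0, 1) =
        (τ • (Ay p + Ph p) - (At p + Ax p)) * ψ p τ := fun τ hτ p => by
      rw [← aux_pdy (dd (hsl τ hτ)), ← aux_pdxi (dd (hsl τ hτ))]
      exact (heq τ hτ p).1
    have hE2 : ∀ τ ∈ V, ∀ p, τ • auxD (fun r => ψ r τ) p (-1, 0, 1) -
        auxD (fun r => ψ r τ) p (0, 1, 0) =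
        (τ • (At p - Ax p) - (Ay p - Ph p)) * ψ p τ := fun τ hτ p => by
      rw [← aux_pdy (dd (hsl τ hτ)), ← aux_pdeta (dd (hsl τ hτ)), (heq τ hτ p).2]
      congr 1
      abel
    have hP1 : ∀ p, (a • auxD Pr p (0, 1, 0) - auxD Pr p (1, 0, 1)) * Pr p = 0 :=
      fun p => by
        rw [← aux_pdy (dd hPrs), ← aux_pdxi (dd hPrs)]
        exact (hsol p).1
    have hP2 : ∀ p, (a • auxD Pr p (-1, 0, 1) - auxD Pr p (0, 1, 0)) * Pr p = 0 :=
      fun p => by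
        rw [← aux_pdy (dd hPrs), ← aux_pdeta (dd hPrs)]
        exact (hsol p).2
    have s1 : ∀ p, (Ay p + Ph p)ᴴ = -(Ay p + Ph p) := fun p => by
      rw [Matrix.conjTranspose_add, hya p, hpa p]; abel
    have s2 : ∀ p, (At p + Ax p)ᴴ = -(At p + Ax p) := fun p => by
      rw [Matrix.conjTranspose_add, hta p, hxa p]; abel
    have s3 : ∀ p, (At p - Ax p)ᴴ = -(At p - Ax p) := fun p => by
      rw [Matrix.conjTranspose_sub, hta p, hxa p]; abel
    have s4 : ∀ p, (Ay p - Ph p)ᴴ = -(Ay p - Ph p) := fun p => by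
      rw [Matrix.conjTranspose_sub, hya p, hpa p]; abel
    have hsum : ∀ p, (2⁻¹ : ℂ) • (Ay p + Ph p + C2 p) + (2⁻¹ : ℂ) • (Ay p + Ph p - C2 p) =
      Ay p + Ph p := fun p => by module
    refine ⟨C1, fun p => At p - Ax p, fun p => (2⁻¹ : ℂ) • (Ay p + Ph p + C2 p),
      fun p => (2⁻¹ : ℂ) • (Ay p + Ph p - C2 p), hC1s, hts.sub hxs,
      ((hys.add hps).add hC2s).const_smul _, ((hys.add hps).sub hC2s).const_smul _,
      fun p => rfl, hsum, ?_⟩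
    intro τ hτ hτa _ p
    constructor
    · rw [aux_pdy (dd (hgs τ hτ)), aux_pdxi (dd (hgs τ hτ)), hsum, hC1]
      exact aux_eqn a (hsl a haV) hPrs hTs hidem hPrtherm hPrtidem (fun p => (hR p).1)
        (fun p => (hR p).2) (B := fun p => Ay p + Ph p) (C := fun p => At p + Ax p) s1 s2 _ _
        (hE1 a haV) hP1 τ hτa (hsl τ hτ) (hE1 τ hτ) p
    · rw [aux_pdy (dd (hgs τ hτ)), aux_pdeta (dd (hgs τ hτ))]
      have : τ • (At p - Ax p) + (2⁻¹ : ℂ) • (Ay p + Ph p - C2 p) -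
          (2⁻¹ : ℂ) • (Ay p + Ph p + C2 p) = τ • (At p - Ax p) - C2 p := by module
      rw [this, hC2]
      exact aux_eqn a (hsl a haV) hPrs hTs hidem hPrtherm hPrtidem (fun p => (hR p).1)
        (fun p => (hR p).2) (B := fun p => At p - Ax p) (C := fun p => Ay p - Ph p) s3 s4 _ _
        (hE2 a haV) hP2 τ hτa (hsl τ hτ) (hE2 τ hτ) p
end
end
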